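/- arXiv:2511.19309 — 3 statements merged into one kernel-verified Lean document; each statement's English description precedes it below -/
import Mathlib

section
/- Let 𝒫 be a generalized perimeter on measurable subsets of 𝕋^{d−1} × ℝ. Then for every R > 0 and every λ ∈ (−R, R), the periodic halfspace H_λ := 𝕋^{d−1} × (−∞, λ) minimizes 𝒫 in 𝔐_R, i.e. 𝒫(H_λ) ≤ 𝒫(F) for every F ∈ 𝔐_R. -/
open MeasureTheory Filter Set
open scoped ENNReal

noncomputable section

/-- The flat torus `𝕋^{d-1}`. -/
abbrev Torus (d : ℕ) : Type := Fin (d-1) → AddCircle (1:ℝ)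

/-- The periodic strip `𝕋^{d-1} × ℝ`. -/
abbrev Cyl (d : ℕ) : Type := Torus d × ℝ

/-- The subgraph of a function `g : 𝕋^{d-1} → ℝ`. -/
def subgraph (d : ℕ) (g : Torus d → ℝ) : Set (Cyl d) := {x | x.2 ≤ g x.1}

/-- The class `𝔠_L` of periodic `L`-Lipschitz subgraphs. -/
def LipClass (d : ℕ) (L : ℝ) : Set (Set (Cyl d)) :=
  {E | ∃ g : Torus d → ℝ, LipschitzWith (Real.toNNReal L) g ∧ E = subgraph d g}

/-- The slab `𝕊^d_R = 𝕋^{d-1} × (-R, R)`. -/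
def SlabR (d : ℕ) (R : ℝ) : Set (Cyl d) := {x | -R < x.2 ∧ x.2 < R}

/-- The class `𝔐_R` of measurable sets squeezed between two halfspaces. -/
def MR (d : ℕ) (R : ℝ) : Set (Set (Cyl d)) :=
  {E | MeasurableSet E ∧ {x : Cyl d | x.2 < -R} ⊆ E ∧ E ⊆ {x : Cyl d | x.2 < R}}

/-- The periodic halfspace `H_λ = 𝕋^{d-1} × (-∞, λ)`. -/
def halfspace (d : ℕ) (lam : ℝ) : Set (Cyl d) := {x | x.2 < lam}

/-- Translation of `𝕋^{d-1} × ℝ` by a vector `τ ∈ ℝ^d = ℝ^{d-1} × ℝ`,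
acting through the quotient. -/
def translCyl (d : ℕ) (τ : (Fin (d-1) → ℝ) × ℝ) (x : Cyl d) : Cyl d :=
  (fun i => x.1 i + (τ.1 i : AddCircle (1:ℝ)), x.2 + τ.2)

/-- A generalized perimeter: a functional `𝒫 : 𝔐 → [0,+∞]` satisfying properties
(i)-(vi) of Definition 1.2. -/
structure GenPerimeter (d : ℕ) where
  P : Set (Cyl d) → ℝ≥0∞
  /-- (i) finiteness on periodic Lipschitz subgraphs -/
  lip_finite : ∀ L : ℝ, 0 < L → ∀ E ∈ LipClass d L, P E < ⊤
  /-- (ii) `𝒫(∅) = 0` -/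
  empty_eq : P ∅ = 0
  /-- (ii) `𝒫(𝕋^{d-1} × ℝ) = 0` -/
  univ_eq : P Set.univ = 0
  /-- (iii) invariance under modifications on null sets -/
  congr_ae : ∀ E E' : Set (Cyl d), volume (symmDiff E E') = 0 → P E = P E'
  /-- (iv) lower semicontinuity w.r.t. local `L¹` convergence -/
  lsc : ∀ (En : ℕ → Set (Cyl d)) (E : Set (Cyl d)),
      (∀ R : ℝ, 0 < R →
        Tendsto (fun n => volume (symmDiff (En n) E ∩ SlabR d R)) atTop (nhds 0)) →
      P E ≤ liminf (fun n => P (En n)) atTop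
  /-- (v) submodularity -/
  submodular : ∀ E F : Set (Cyl d), P (E ∪ F) + P (E ∩ F) ≤ P E + P F
  /-- (vi) translational invariance -/
  transl_inv : ∀ (E : Set (Cyl d)) (τ : (Fin (d-1) → ℝ) × ℝ), P (translCyl d τ '' E) = P E

/-- Signed distance from a set `E`. -/
def sdist (d : ℕ) (E : Set (Cyl d)) (x : Cyl d) : ℝ :=
  Metric.infDist x E - Metric.infDist x Eᶜ

/-- The incremental functional `𝓕̃_h(E, F) = 𝒫(F) + (1/h) ∫_{F ∩ 𝕊^d_R} sdist_E`. -/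
def Ftilde (d : ℕ) (P : GenPerimeter d) (R h : ℝ) (E F : Set (Cyl d)) : EReal :=
  (P.P F : EReal) + (((1/h) * ∫ x in F ∩ SlabR d R, sdist d E x) : ℝ)

/-- `F` minimizes `𝓕̃_h(E, ·)` in `𝔐_R`. -/
def IsMinimizer (d : ℕ) (P : GenPerimeter d) (R h : ℝ) (E F : Set (Cyl d)) : Prop :=
  F ∈ MR d R ∧ ∀ F' ∈ MR d R, Ftilde d P R h E F ≤ Ftilde d P R h E F'

/-!
Submodularity lets one uncross `n` sets: the sets `{x | x lies in more than j of the Aᵢ}` have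
total perimeter at most `∑ P(Aᵢ)`. Equivalently, `u ↦ ∫₀¹ P {u ≥ t} dt` satisfies Jensen's
inequality at averages of indicators. Apply this to independent random translates of `F`, uniform
in the torus and in a vertical window of height `N` at least that of the slab containing `∂F`. By
the strong law of large numbers, lower semicontinuity and Fatou's lemma,
`∫₀¹ P {w ≥ t} dt ≤ P(F)`, where `w` is the average of the indicators of all these translates.
Since `w` depends on the height alone and `F` lowered by `N` is contained in `F`, the profile `w`
decreases from `1` to `0`. Its superlevel sets are therefore halfspaces up to null sets, and all
halfspaces have the same perimeter by translation invariance.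
-/

open ProbabilityTheory
open scoped Topology

section Uncrossing

variable {X : Type*}

/-- The number of sets among `A 0, …, A (n - 1)` that contain a given point. -/
def coverCount (A : ℕ → Set X) (n : ℕ) (x : X) : ℕ :=
  ∑ i ∈ Finset.range n, (A i).indicator 1 x

lemma coverCount_succ (A : ℕ → Set X) (n : ℕ) (x : X) :
    coverCount A (n + 1) x = coverCount A n x + (A n).indicator 1 x :=
  Finset.sum_range_succ ..

lemma coverCount_le (A : ℕ → Set X) (n : ℕ) (x : X) : coverCount A n x ≤ n := by
  have hle (i : ℕ) : (A i).indicator 1 x ≤ 1 := indicator_le_self' (fun _ _ => zero_le_one) x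
  simpa [coverCount] using Finset.sum_le_card_nsmul (Finset.range n) _ 1 fun i _ => hle i

lemma natCast_coverCount (A : ℕ → Set X) (n : ℕ) (x : X) :
    (coverCount A n x : ℝ) = ∑ i ∈ Finset.range n, (A i).indicator 1 x := by
  rw [coverCount, Nat.cast_sum]
  exact Finset.sum_congr rfl fun i _ => by by_cases hx : x ∈ A i <;> simp [hx]

lemma measurable_coverCount [MeasurableSpace X] {A : ℕ → Set X} (hA : ∀ i, MeasurableSet (A i))
    (n : ℕ) : Measurable (coverCount A n) :=
  Finset.measurable_fun_sum _ fun i _ => measurable_one.indicator (hA i)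

lemma setOf_lt_coverCount_succ (A : ℕ → Set X) (n j : ℕ) :
    {x | j < coverCount A (n + 1) x} =
      {x | j < coverCount A n x} ∪ ({x | j ≤ coverCount A n x} ∩ A n) := by
  ext x
  by_cases hx : x ∈ A n
  · simpa [coverCount_succ, hx] using by lia
  · simp [coverCount_succ, hx]

variable {M : Type*} [AddCommMonoid M] [PartialOrder M] [IsOrderedAddMonoid M] {f : Set X → M}

lemma sum_levelSet_coverCount_succ_add_le (hsub : ∀ E F, f (E ∪ F) + f (E ∩ F) ≤ f E + f F)
    (A : ℕ → Set X) (n m : ℕ) :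
    ∑ j ∈ Finset.range m, f {x | j < coverCount A (n + 1) x}
        + f ({x | m ≤ coverCount A n x} ∩ A n) ≤
      ∑ j ∈ Finset.range m, f {x | j < coverCount A n x} + f (A n) := by
  induction m with
  | zero => simp
  | succ m ih =>
    have uncross : f {x | m < coverCount A (n + 1) x} + f ({x | m < coverCount A n x} ∩ A n) ≤
        f {x | m < coverCount A n x} + f ({x | m ≤ coverCount A n x} ∩ A n) := by
      have hinter : {x | m < coverCount A n x} ∩ ({x | m ≤ coverCount A n x} ∩ A n) =
          {x | m < coverCount A n x} ∩ A n := by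
        ext x
        simpa using fun hm _ => hm.le
      simpa only [setOf_lt_coverCount_succ, hinter] using
        hsub {x | m < coverCount A n x} ({x | m ≤ coverCount A n x} ∩ A n)
    rw [Finset.sum_range_succ, Finset.sum_range_succ, add_assoc]
    calc _ ≤ ∑ j ∈ Finset.range m, f {x | j < coverCount A (n + 1) x} +
            (f {x | m < coverCount A n x} + f ({x | m ≤ coverCount A n x} ∩ A n)) :=
          add_le_add_right uncross _
      _ = (∑ j ∈ Finset.range m, f {x | j < coverCount A (n + 1) x} +
            f ({x | m ≤ coverCount A n x} ∩ A n)) + f {x | m < coverCount A n x} := by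
          rw [add_comm (f {x | m < coverCount A n x}), add_assoc]
      _ ≤ _ := by grw [ih, add_right_comm]

theorem sum_levelSet_coverCount_le (hempty : f ∅ = 0)
    (hsub : ∀ E F, f (E ∪ F) + f (E ∩ F) ≤ f E + f F) (A : ℕ → Set X) (n : ℕ) :
    ∑ j ∈ Finset.range n, f {x | j < coverCount A n x} ≤ ∑ i ∈ Finset.range n, f (A i) := by
  induction n with
  | zero => simp
  | succ n ih =>
    have hlast : {x | n < coverCount A n x} = ∅ := by
      ext x
      simpa using coverCount_le A n x
    have hinter : {x | n + 1 ≤ coverCount A n x} ∩ A n = ∅ := by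
      simp only [Nat.add_one_le_iff, hlast, empty_inter]
    have hstep := sum_levelSet_coverCount_succ_add_le hsub A n (n + 1)
    rw [hinter, hempty, add_zero, Finset.sum_range_succ (fun j => f {x | j < coverCount A n x}),
      hlast, hempty, add_zero] at hstep
    rw [Finset.sum_range_succ (fun i => f (A i))]
    exact hstep.trans (by gcongr)

end Uncrossing

section LevelAveraging

lemma setLIntegral_comp_natCeil_mul {n : ℕ} (hn : 0 < n) (g : ℕ → ℝ≥0∞) (m : ℕ) :
    ∫⁻ t in Ioc (0 : ℝ) (m / n), g ⌈t * n⌉₊ = (∑ j ∈ Finset.range m, g (j + 1)) / n := by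
  have hn' : (0 : ℝ) < n := Nat.cast_pos.2 hn
  induction m with
  | zero => simp
  | succ m ih =>
    have hle : (m : ℝ) / n ≤ (m + 1 : ℕ) / n := by gcongr; simp
    have hceil : ∀ t ∈ Ioc ((m : ℝ) / n) ((m + 1 : ℕ) / n), g ⌈t * n⌉₊ = g (m + 1) := by
      rintro t ⟨ht_lower, ht_upper⟩
      congr 1
      rw [Nat.ceil_eq_iff m.succ_ne_zero]
      exact ⟨by simpa [div_lt_iff₀ hn'] using ht_lower, (le_div_iff₀ hn').1 ht_upper⟩
    have hvol : volume (Ioc ((m : ℝ) / n) ((m + 1 : ℕ) / n)) = (n : ℝ≥0∞)⁻¹ := by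
      rw [Real.volume_Ioc, ← sub_div]
      simp [ENNReal.ofReal_inv_of_pos hn']
    rw [← Ioc_union_Ioc_eq_Ioc (by positivity) hle,
      lintegral_union measurableSet_Ioc (Ioc_disjoint_Ioc_of_le le_rfl), ih,
      setLIntegral_congr_fun measurableSet_Ioc hceil, setLIntegral_const, hvol,
      Finset.sum_range_succ, ENNReal.add_div, ENNReal.div_eq_inv_mul (a := g (m + 1)),
      mul_comm (g (m + 1))]

end LevelAveraging

section LawOfLargeNumbers

variable {S X : Type*} [MeasurableSpace S] [MeasurableSpace X] {μ : Measure S}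
  [IsProbabilityMeasure μ]

lemma ae_infinitePi_tendsto_average {f : S → ℝ} (hf : Measurable f) (hint : Integrable f μ) :
    ∀ᵐ s ∂Measure.infinitePi fun _ : ℕ => μ,
      Tendsto (fun n : ℕ => (∑ i ∈ Finset.range n, f (s i)) / n) atTop (𝓝 (∫ t, f t ∂μ)) := by
  have hlaw (i : ℕ) : HasLaw (Function.eval i) μ (Measure.infinitePi fun _ : ℕ => μ) :=
    (measurePreserving_eval_infinitePi (fun _ : ℕ => μ) i).hasLaw
  have hmean : ∫ s, f (s 0) ∂Measure.infinitePi (fun _ : ℕ => μ) = ∫ t, f t ∂μ :=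
    (hlaw 0).integral_comp hf.aestronglyMeasurable
  have hslln := strong_law_ae_real (fun i (s : ℕ → S) => f (s i))
    ((measurePreserving_eval_infinitePi (fun _ => μ) 0).integrable_comp_of_integrable hint)
    (fun i j hij => (iIndepFun_infinitePi (X := fun _ => f) fun _ => hf).indepFun hij)
    (fun i => ((hlaw i).identDistrib (hlaw 0)).comp hf)
  rwa [hmean] at hslln

theorem exists_seq_ae_tendsto_average (ν : Measure X) [SFinite ν] {f : S → X → ℝ}
    (hf : Measurable (Function.uncurry f)) (hint : ∀ x, Integrable (f · x) μ) :
    ∃ s : ℕ → S, ∀ᵐ x ∂ν,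
      Tendsto (fun n : ℕ => (∑ i ∈ Finset.range n, f (s i) x) / n) atTop
        (𝓝 (∫ t, f t x ∂μ)) := by
  have hsection (x : X) : Measurable (f · x) := hf.comp measurable_prodMk_right
  have hlimit : Measurable fun x => ∫ t, f t x ∂μ :=
    (StronglyMeasurable.integral_prod_left hf.stronglyMeasurable).measurable
  have havg (n : ℕ) : Measurable fun z : (ℕ → S) × X =>
      (∑ i ∈ Finset.range n, f (z.1 i) z.2) / n :=
    (Finset.measurable_fun_sum _ fun i _ =>
      hf.comp (by fun_prop : Measurable fun z : (ℕ → S) × X => (z.1 i, z.2))).div_const _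
  have hmeas : MeasurableSet {z : (ℕ → S) × X | Tendsto
      (fun n : ℕ => (∑ i ∈ Finset.range n, f (z.1 i) z.2) / n) atTop (𝓝 (∫ t, f t z.2 ∂μ))} :=
    measurableSet_tendsto_fun havg (hlimit.comp measurable_snd)
  exact ((Measure.ae_ae_comm hmeas).2 (.of_forall fun x =>
    ae_infinitePi_tendsto_average (hsection x) (hint x))).exists

lemma exists_seq_ae_tendsto_coverCount_div (μ : Measure S) [IsProbabilityMeasure μ]
    (ν : Measure X) [SFinite ν] {A : S → Set X}
    (hA : MeasurableSet {z : S × X | z.2 ∈ A z.1}) :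
    ∃ s : ℕ → S, ∀ᵐ x ∂ν,
      Tendsto (fun n : ℕ => (coverCount (fun i => A (s i)) n x : ℝ) / n) atTop
        (𝓝 (μ.real {t | x ∈ A t})) := by
  have hsection (x : X) : MeasurableSet {t | x ∈ A t} := measurable_prodMk_right hA
  obtain ⟨s, hs⟩ := exists_seq_ae_tendsto_average (μ := μ) ν
    (f := fun t x => (A t).indicator 1 x)
    (measurable_one.indicator hA) fun x => (integrable_const 1).indicator (hsection x)
  refine ⟨s, hs.mono fun x hx => ?_⟩
  have hmean : ∫ t, (A t).indicator (1 : X → ℝ) x ∂μ = μ.real {t | x ∈ A t} :=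
    integral_indicator_one (hsection x)
  simpa only [natCast_coverCount, hmean] using hx

end LawOfLargeNumbers

section LayerCake

lemma eventually_le_iff_of_tendsto {ι : Type*} {l : Filter ι} {u : ι → ℝ} {a t : ℝ}
    (hu : Tendsto u l (𝓝 a)) (hat : a ≠ t) : ∀ᶠ i in l, t ≤ u i ↔ t ≤ a := by
  rcases hat.lt_or_gt with hlt | hgt
  · filter_upwards [hu.eventually_lt_const hlt] with i hi
    exact iff_of_false hi.not_ge hlt.not_ge
  · filter_upwards [hu.eventually_const_lt hgt] with i hi
    exact iff_of_true hi.le hgt.le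

lemma ae_measure_setOf_eq_eq_zero {X : Type*} [MeasurableSpace X] (ν : Measure X) [SFinite ν]
    {u : X → ℝ} (hu : Measurable u) : ∀ᵐ t : ℝ, ν {x | u x = t} = 0 := by
  filter_upwards [(Measure.countable_meas_level_set_pos (μ := ν) hu).ae_notMem volume] with t ht
  simpa using ht

/-- Lower semicontinuity of a set function along sequences of measurable sets that converge to a
measurable set `ν`-almost everywhere. -/
def AELowerSemicontinuous {X : Type*} [MeasurableSpace X] (ν : Measure X)
    (f : Set X → ℝ≥0∞) : Prop :=
  ∀ (E : ℕ → Set X) (F : Set X), (∀ n, MeasurableSet (E n)) → MeasurableSet F →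
    (∀ᵐ x ∂ν, ∀ᶠ n in atTop, x ∈ E n ↔ x ∈ F) → f F ≤ liminf (fun n => f (E n)) atTop

variable {S X : Type*} {f : Set X → ℝ≥0∞}

lemma setLIntegral_levelSet_coverCount_le (hempty : f ∅ = 0)
    (hsub : ∀ E F, f (E ∪ F) + f (E ∩ F) ≤ f E + f F) {A : ℕ → Set X} {c : ℝ≥0∞}
    (hc : ∀ i, f (A i) ≤ c) {n : ℕ} (hn : 0 < n) :
    ∫⁻ t in Ioc (0 : ℝ) 1, f {x | ⌈t * n⌉₊ ≤ coverCount A n x} ≤ c := by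
  have hn' : (n : ℝ) ≠ 0 := by positivity
  calc ∫⁻ t in Ioc (0 : ℝ) 1, f {x | ⌈t * n⌉₊ ≤ coverCount A n x}
      = (∑ j ∈ Finset.range n, f {x | j < coverCount A n x}) / n := by
        simpa only [div_self hn', Nat.add_one_le_iff] using
          setLIntegral_comp_natCeil_mul hn (fun j => f {x | j ≤ coverCount A n x}) n
    _ ≤ (∑ i ∈ Finset.range n, f (A i)) / n :=
        ENNReal.div_le_div_right (sum_levelSet_coverCount_le hempty hsub A n) _
    _ ≤ c := ENNReal.div_le_of_le_mul' <| by
        simpa using Finset.sum_le_card_nsmul (Finset.range n) _ c fun i _ => hc i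

variable [MeasurableSpace S] [MeasurableSpace X]

-- Jensen's inequality for the convex extension `u ↦ ∫ f {u ≥ t} dt` of `f`, evaluated at the
-- average `u` of the indicators of the sets `A s`.
theorem setLIntegral_levelSet_measureReal_le (hempty : f ∅ = 0)
    (hsub : ∀ E F, f (E ∪ F) + f (E ∩ F) ≤ f E + f F) {ν : Measure X} [SFinite ν]
    (hlsc : AELowerSemicontinuous ν f) (μ : Measure S) [IsProbabilityMeasure μ] {A : S → Set X}
    (hA : MeasurableSet {z : S × X | z.2 ∈ A z.1}) {c : ℝ≥0∞} (hc : ∀ s, f (A s) ≤ c) :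
    ∫⁻ t in Ioc (0 : ℝ) 1, f {x | t ≤ μ.real {s | x ∈ A s}} ≤ c := by
  obtain ⟨s, hs⟩ := exists_seq_ae_tendsto_coverCount_div μ ν hA
  have hAs (i : ℕ) : MeasurableSet (A (s i)) := measurable_prodMk_left hA
  have havg : Measurable fun x => μ.real {s | x ∈ A s} :=
    (measurable_measure_prodMk_right hA).ennreal_toReal
  have hliminf : ∀ᵐ t : ℝ, f {x | t ≤ μ.real {s | x ∈ A s}} ≤
      liminf (fun n : ℕ => f {x | ⌈t * n⌉₊ ≤ coverCount (fun i => A (s i)) n x}) atTop := by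
    filter_upwards [ae_measure_setOf_eq_eq_zero ν havg] with t ht
    refine hlsc _ _ (fun n => measurable_coverCount hAs n measurableSet_Ici)
      (havg measurableSet_Ici) ?_
    filter_upwards [hs, measure_eq_zero_iff_ae_notMem.1 ht] with x hx hxt
    filter_upwards [eventually_le_iff_of_tendsto hx hxt, eventually_gt_atTop 0] with n hlevel hn
    simpa [le_div_iff₀ (Nat.cast_pos.2 hn : (0 : ℝ) < n), Nat.ceil_le] using hlevel
  calc ∫⁻ t in Ioc (0 : ℝ) 1, f {x | t ≤ μ.real {s | x ∈ A s}}
      ≤ ∫⁻ t in Ioc (0 : ℝ) 1,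
          liminf (fun n : ℕ => f {x | ⌈t * n⌉₊ ≤ coverCount (fun i => A (s i)) n x}) atTop :=
        lintegral_mono_ae (ae_restrict_of_ae hliminf)
    _ ≤ liminf (fun n : ℕ => ∫⁻ t in Ioc (0 : ℝ) 1,
          f {x | ⌈t * n⌉₊ ≤ coverCount (fun i => A (s i)) n x}) atTop :=
        lintegral_liminf_le fun n =>
          (measurable_from_nat (f := fun j => f {x | j ≤ coverCount (fun i => A (s i)) n x})).comp
            (Nat.measurable_ceil.comp (measurable_id.mul_const _))
    _ ≤ c := liminf_le_of_frequently_le' <| Eventually.frequently <| by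
        filter_upwards [eventually_gt_atTop 0] with n hn
        exact setLIntegral_levelSet_coverCount_le hempty hsub (fun i => hc (s i)) hn

end LayerCake

section AntitoneProfile

lemma exists_setOf_le_ae_eq_Iio_of_antitone {w : ℝ → ℝ} (hw : Antitone w) {t r₀ r₁ : ℝ}
    (hr₀ : t ≤ w r₀) (hr₁ : w r₁ < t) : ∃ a, {r | t ≤ w r} =ᵐ[volume] Iio a := by
  have hbdd : BddAbove {r | t ≤ w r} :=
    ⟨r₁, fun r hr => le_of_not_gt fun hlt => (hr₁.trans_le hr).not_ge (hw hlt.le)⟩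
  have hIio : Iio (sSup {r | t ≤ w r}) ⊆ {r | t ≤ w r} := fun r hr => by
    obtain ⟨r', hr', hlt⟩ := exists_lt_of_lt_csSup ⟨r₀, hr₀⟩ hr
    exact le_trans hr' (hw hlt.le)
  refine ⟨sSup {r | t ≤ w r}, EventuallyLE.antisymm ?_ hIio.eventuallyLE⟩
  have hIic : {r | t ≤ w r} ⊆ Iic (sSup {r | t ≤ w r}) := fun r hr => le_csSup hbdd hr
  exact hIic.eventuallyLE.trans Iio_ae_eq_Iic.symm.le

lemma antitone_intervalIntegral_add {f : ℝ → ℝ} {N : ℝ}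
    (hint : ∀ a b, IntervalIntegrable f volume a b) (hf : ∀ y, f (y + N) ≤ f y) :
    Antitone fun r => ∫ y in r..r + N, f y := by
  intro r r' hrr'
  have hshift : ∫ y in r + N..r' + N, f y ≤ ∫ y in r..r', f y := by
    rw [← intervalIntegral.integral_comp_add_right]
    exact intervalIntegral.integral_mono hrr'
      (by simpa using (hint (r + N) (r' + N)).comp_add_right N) (hint r r') hf
  have hsplit := intervalIntegral.integral_add_adjacent_intervals (hint r (r + N))
    (hint (r + N) (r' + N))
  have hsplit' := intervalIntegral.integral_add_adjacent_intervals (hint r r')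
    (hint r' (r' + N))
  dsimp only
  linarith

end AntitoneProfile

section SliceVolume

variable {T : Type*} [MeasureSpace T] {F : Set (T × ℝ)}

/-- The volume of the horizontal slice of `F` at height `y`. -/
def sliceVolume (F : Set (T × ℝ)) (y : ℝ) : ℝ :=
  volume.real {θ | (θ, y) ∈ F}

/-- The mean volume of the horizontal slices of `F` at heights between `r` and `r + N`. -/
def windowAverage (F : Set (T × ℝ)) (N r : ℝ) : ℝ :=
  (∫ y in r..r + N, sliceVolume F y) / N

lemma sliceVolume_eq_zero {b y : ℝ} (hb : F ⊆ Prod.snd ⁻¹' Iio b) (hy : b ≤ y) :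
    sliceVolume F y = 0 := by
  have hempty : {θ : T | (θ, y) ∈ F} = ∅ := eq_empty_of_forall_notMem fun θ hθ => hy.not_gt (hb hθ)
  simp [sliceVolume, hempty]

lemma windowAverage_eq_zero {b N r : ℝ} (hb : F ⊆ Prod.snd ⁻¹' Iio b) (hN : 0 ≤ N) (hr : b ≤ r) :
    windowAverage F N r = 0 := by
  have hzero : EqOn (sliceVolume F) (fun _ => 0) (uIcc r (r + N)) := fun y hy => by
    rw [uIcc_of_le (by linarith)] at hy
    exact sliceVolume_eq_zero hb (hr.trans hy.1)
  simp [windowAverage, intervalIntegral.integral_congr hzero]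

lemma measurable_sliceVolume [SFinite (volume : Measure T)] (hF : MeasurableSet F) :
    Measurable (sliceVolume F) :=
  (measurable_measure_prodMk_right hF).ennreal_toReal

section Finite

variable [IsFiniteMeasure (volume : Measure T)]

lemma intervalIntegrable_sliceVolume (hF : MeasurableSet F) (a b : ℝ) :
    IntervalIntegrable (sliceVolume F) volume a b :=
  (intervalIntegrable_const (c := volume.real (univ : Set T))).mono_fun
    (measurable_sliceVolume hF).aestronglyMeasurable
    (.of_forall fun _ =>
      abs_le_abs_of_nonneg measureReal_nonneg (measureReal_mono (subset_univ _)))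

lemma sliceVolume_add_le {a b N : ℝ} (ha : Prod.snd ⁻¹' Iio a ⊆ F)
    (hb : F ⊆ Prod.snd ⁻¹' Iio b) (hab : b - a ≤ N) (y : ℝ) :
    sliceVolume F (y + N) ≤ sliceVolume F y :=
  measureReal_mono fun θ hθ => ha <| show y < a by
    have hlt : y + N < b := hb hθ
    linarith

lemma antitone_windowAverage (hF : MeasurableSet F) {a b N : ℝ} (ha : Prod.snd ⁻¹' Iio a ⊆ F)
    (hb : F ⊆ Prod.snd ⁻¹' Iio b) (hN : 0 ≤ N) (hab : b - a ≤ N) :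
    Antitone (windowAverage F N) := fun _ _ hrr' =>
  div_le_div_of_nonneg_right
    (antitone_intervalIntegral_add (intervalIntegrable_sliceVolume hF)
      (sliceVolume_add_le ha hb hab) hrr') hN

end Finite

section Probability

variable [IsProbabilityMeasure (volume : Measure T)]

lemma sliceVolume_eq_one {a y : ℝ} (ha : Prod.snd ⁻¹' Iio a ⊆ F) (hy : y < a) :
    sliceVolume F y = 1 := by
  have huniv : {θ : T | (θ, y) ∈ F} = univ := eq_univ_of_forall fun θ => ha hy
  simp [sliceVolume, huniv]

lemma windowAverage_eq_one {a N r : ℝ} (ha : Prod.snd ⁻¹' Iio a ⊆ F) (hN : 0 < N)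
    (hr : r + N < a) : windowAverage F N r = 1 := by
  have hone : EqOn (sliceVolume F) (fun _ => 1) (uIcc r (r + N)) := fun y hy => by
    rw [uIcc_of_le (by linarith)] at hy
    exact sliceVolume_eq_one ha (hy.2.trans_lt hr)
  simp [windowAverage, intervalIntegral.integral_congr hone, hN.ne']

lemma exists_setOf_le_windowAverage_ae_eq_Iio (hF : MeasurableSet F) {a b N t : ℝ}
    (ha : Prod.snd ⁻¹' Iio a ⊆ F) (hb : F ⊆ Prod.snd ⁻¹' Iio b) (hN : 0 < N) (hab : b - a ≤ N)
    (ht : t ∈ Ioc 0 1) : ∃ c, {r | t ≤ windowAverage F N r} =ᵐ[volume] Iio c :=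
  exists_setOf_le_ae_eq_Iio_of_antitone (antitone_windowAverage hF ha hb hN.le hab)
    (ht.2.trans_eq (windowAverage_eq_one ha hN (r := a - N - 1) (by linarith)).symm)
    ((windowAverage_eq_zero hb hN.le le_rfl).trans_lt ht.1)

end Probability

section Translation

variable [IsFiniteMeasure (volume : Measure T)] [AddGroup T] [MeasurableAdd T]
  [(volume : Measure T).IsAddLeftInvariant]

lemma measureReal_prod_setOf_add_mem (ρ : Measure ℝ) [SFinite ρ] (hF : MeasurableSet F)
    (x : T × ℝ) :
    ((volume : Measure T).prod ρ).real {s | x + s ∈ F} = ∫ y, sliceVolume F (x.2 + y) ∂ρ := by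
  have hmeas : MeasurableSet {s | x + s ∈ F} :=
    ((measurable_const_add x.1).prodMap (measurable_const_add x.2)) hF
  have hslice (y : ℝ) : volume ((fun θ => (θ, y)) ⁻¹' {s | x + s ∈ F}) =
      volume {θ | (θ, x.2 + y) ∈ F} :=
    measure_preimage_add volume x.1 {θ | (θ, x.2 + y) ∈ F}
  rw [Measure.real, Measure.prod_apply_symm hmeas, ← integral_toReal]
  · simp only [hslice]
    rfl
  · exact (measurable_measure_prodMk_right hmeas).aemeasurable
  · exact .of_forall fun _ => measure_lt_top _ _

lemma measureReal_prod_cond_setOf_add_mem (hF : MeasurableSet F) {N : ℝ} (hN : 0 < N)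
    (x : T × ℝ) :
    ((volume : Measure T).prod volume[|Ioc 0 N]).real {s | x + s ∈ F} =
      windowAverage F N x.2 := by
  rw [measureReal_prod_setOf_add_mem _ hF, ProbabilityTheory.cond, integral_smul_measure,
    ← intervalIntegral.integral_of_le hN.le, intervalIntegral.integral_comp_add_left]
  simp [windowAverage, hN.le, div_eq_inv_mul]

end Translation

end SliceVolume

section Torus

instance isProbabilityMeasure_volume_torus (d : ℕ) :
    IsProbabilityMeasure (volume : Measure (Torus d)) :=
  ⟨by simp [volume_pi, Measure.pi_univ, AddCircle.measure_univ]⟩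

instance isAddLeftInvariant_volume_torus (d : ℕ) :
    (volume : Measure (Torus d)).IsAddLeftInvariant := by
  rw [volume_pi]
  infer_instance

lemma measure_slabR_ne_top (d : ℕ) (R : ℝ) : volume (SlabR d R) ≠ ⊤ := by
  have hprod : SlabR d R = univ ×ˢ Ioo (-R) R := by ext; simp [SlabR]
  rw [hprod, Measure.volume_eq_prod, Measure.prod_prod, Real.volume_Ioo]
  exact ENNReal.mul_ne_top (measure_ne_top _ _) ENNReal.ofReal_ne_top

end Torus

namespace GenPerimeter

variable {d : ℕ} (P : GenPerimeter d)

lemma aeLowerSemicontinuous : AELowerSemicontinuous volume P.P := by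
  intro E F hE hF hlim
  refine P.lsc E F fun R _ => ?_
  have : IsFiniteMeasure (volume.restrict (SlabR d R)) :=
    isFiniteMeasure_restrict.2 (measure_slabR_ne_top d R)
  have hsymm (n : ℕ) : MeasurableSet (symmDiff (E n) F) := (hE n).symmDiff hF
  simp_rw [← Measure.restrict_apply (hsymm _)]
  rw [← measure_empty (μ := volume.restrict (SlabR d R))]
  refine tendsto_measure_of_ae_tendsto_indicator_of_isFiniteMeasure atTop .empty hsymm
    (ae_restrict_of_ae ?_)
  filter_upwards [hlim] with x hx
  filter_upwards [hx] with n hn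
  simp [mem_symmDiff, hn]

lemma setOf_add_mem (E : Set (Cyl d)) (s : Cyl d) : P.P {x | x + s ∈ E} = P.P E := by
  choose τ hτ using fun i => QuotientAddGroup.mk_surjective (-s.1 i)
  have htransl (x : Cyl d) : translCyl d (τ, -s.2) x = x - s := by
    ext i
    · exact (congrArg (x.1 i + ·) (hτ i)).trans (sub_eq_add_neg _ _).symm
    · exact (sub_eq_add_neg _ _).symm
  rw [← P.transl_inv E (τ, -s.2)]
  congr 1
  ext x
  simp [htransl, sub_eq_iff_eq_add]

lemma halfspace_eq (a b : ℝ) : P.P (halfspace d a) = P.P (halfspace d b) := by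
  rw [← P.setOf_add_mem (halfspace d a) (0, a - b)]
  congr 1
  ext x
  simp only [halfspace, mem_ofPred_eq, Prod.snd_add]
  constructor <;> intro h <;> linarith

lemma snd_preimage_eq_of_ae_eq_Iio {I : Set ℝ} {a : ℝ} (hI : I =ᵐ[volume] Iio a) :
    P.P (Prod.snd ⁻¹' I) = P.P (halfspace d a) :=
  P.congr_ae _ _ <| measure_symmDiff_eq_zero_iff.2 <|
    Measure.quasiMeasurePreserving_snd.preimage_ae_eq hI

end GenPerimeter

theorem halfspace_minimizes_general {d : ℕ} (P : GenPerimeter d) {F : Set (Cyl d)}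
    (hF : MeasurableSet F) {a b : ℝ} (ha : halfspace d a ⊆ F) (hb : F ⊆ halfspace d b)
    (lam : ℝ) : P.P (halfspace d lam) ≤ P.P F := by
  obtain ⟨N, hN, hab⟩ : ∃ N : ℝ, 0 < N ∧ b - a ≤ N :=
    ⟨max 1 (b - a), by positivity, le_max_right _ _⟩
  have : IsProbabilityMeasure (volume[|Ioc 0 N] : Measure ℝ) :=
    cond_isProbabilityMeasure_of_finite (by simpa using hN) (by simp)
  have hlevel (t : ℝ) (ht : t ∈ Ioc 0 1) :
      P.P {x | t ≤ windowAverage F N x.2} = P.P (halfspace d lam) := by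
    obtain ⟨r, hr⟩ := exists_setOf_le_windowAverage_ae_eq_Iio hF ha hb hN hab ht
    exact (P.snd_preimage_eq_of_ae_eq_Iio hr).trans (P.halfspace_eq r lam)
  have htranslates : MeasurableSet {z : Cyl d × Cyl d | z.2 ∈ {x | x + z.1 ∈ F}} :=
    (measurable_snd.add measurable_fst) hF
  calc P.P (halfspace d lam) = ∫⁻ t in Ioc (0 : ℝ) 1, P.P {x | t ≤ windowAverage F N x.2} := by
        simp [setLIntegral_congr_fun measurableSet_Ioc hlevel]
    _ ≤ P.P F := by
        simpa only [mem_ofPred_eq, measureReal_prod_cond_setOf_add_mem hF hN] using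
          setLIntegral_levelSet_measureReal_le P.empty_eq P.submodular P.aeLowerSemicontinuous
            ((volume : Measure (Torus d)).prod volume[|Ioc 0 N]) htranslates
            fun s => (P.setOf_add_mem F s).le

/-- Periodic halfspaces minimize any generalized perimeter in `𝔐_R`. -/
theorem halfspace_minimizes (d : ℕ) (hd : 2 ≤ d) (P : GenPerimeter d) (R : ℝ) (hR : 0 < R)
    (lam : ℝ) (hlam : lam ∈ Set.Ioo (-R) R) :
    ∀ F ∈ MR d R, P.P (halfspace d lam) ≤ P.P F :=
  fun _ hF => halfspace_minimizes_general P hF.1 hF.2.1 hF.2.2 lam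
end
end

section
/- Let 𝒫 be a generalized perimeter, R > 0, h > 0, and E ∈ 𝔐_R with 𝒫(E) < +∞. Then the functional 𝓕̃_h(E,·) admits a minimizer in 𝔐_R; moreover there exist minimizers T_h^−[E], T_h^+[E] ∈ 𝔐_R that are minimal, respectively maximal, with respect to inclusion: for every minimizer F of 𝓕̃_h(E,·) in 𝔐_R one has |T_h^−[E] \ F| = 0 and |F \ T_h^+[E]| = 0. -/
open MeasureTheory Filter Set
open scoped ENNReal

noncomputable section

/-!
Split the potential as `g = g⁺ - g⁻`. Up to the constant `∫ g⁻`, the functional `𝒫(F) + ∫_F g`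
equals `J(F) := 𝒫(F) + ∫_F g⁺ + ∫_{Fᶜ} g⁻`, which takes values in `[0, ∞]`, is submodular, and is
lower semicontinuous along monotone sequences of sets.

No compactness is needed to minimize such a `J`. If `J(F_n) ≤ inf J + 2⁻ⁿ`, submodularity makes the
errors of finite unions add up, so `J(⋃_{k ≥ n} F_k) ≤ inf J + ∑_{k ≥ n} 2⁻ᵏ`, and `limsup F_n` is
a minimizer. The same estimate with zero errors shows that minimizers are stable under countable
unions, and dually under countable intersections. A union (intersection) of countably many
minimizers realizing the supremum (infimum) of an equivalent finite measure is then the largest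
(smallest) minimizer up to null sets.
-/

/-- The minimizers of `J` over the constraint set `M`. -/
def minimizers {L β : Type*} [LE β] (J : L → β) (M : Set L) : Set L :=
  {F | F ∈ M ∧ ∀ G ∈ M, J F ≤ J G}

/-- A subset of a complete lattice that is closed under suprema and infima of sequences; for
`L = Set α`, a family of sets stable under countable unions and intersections. -/
structure IsSigmaSublattice {L : Type*} [CompleteLattice L] (M : Set L) : Prop where
  iSup_mem : ∀ F : ℕ → L, (∀ n, F n ∈ M) → ⨆ n, F n ∈ M
  iInf_mem : ∀ F : ℕ → L, (∀ n, F n ∈ M) → ⨅ n, F n ∈ M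

/-- `J` is submodular on `M` and lower semicontinuous along the monotone sequences of `M`. The
notion is invariant under passing to the order dual. -/
structure IsSubmodularLscOn {L : Type*} [CompleteLattice L] (J : L → ℝ≥0∞) (M : Set L) :
    Prop where
  submodular : ∀ F ∈ M, ∀ G ∈ M, J (F ⊔ G) + J (F ⊓ G) ≤ J F + J G
  lsc_iSup : ∀ F : ℕ → L, (∀ n, F n ∈ M) → Monotone F →
    J (⨆ n, F n) ≤ liminf (fun n => J (F n)) atTop
  lsc_iInf : ∀ F : ℕ → L, (∀ n, F n ∈ M) → Antitone F →
    J (⨅ n, F n) ≤ liminf (fun n => J (F n)) atTop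

theorem minimizers_congr {L β γ : Type*} [LE β] [LE γ] {f : L → β} {g : L → γ} {M : Set L}
    (h : ∀ F ∈ M, ∀ G ∈ M, f F ≤ f G ↔ g F ≤ g G) : minimizers f M = minimizers g M :=
  Set.ext fun F => and_congr_right fun hF => forall₂_congr fun G hG => h F hF G hG

theorem liminf_add_liminf_le_liminf_add {ι : Type*} {l : Filter ι} (u v : ι → ℝ≥0∞) :
    liminf u l + liminf v l ≤ liminf (fun n => u n + v n) l := by
  rw [liminf_eq, liminf_eq, sSup_eq_iSup, sSup_eq_iSup]
  refine ENNReal.biSup_add_biSup_le' ⟨0, by simp⟩ ⟨0, by simp⟩ fun a ha b hb => ?_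
  exact le_liminf_of_le (by isBoundedDefault) (ha.mp (hb.mono fun n hb ha => add_le_add ha hb))

theorem exists_mem_le_sInf_image_add {L : Type*} {M : Set L} (hne : M.Nonempty)
    (J : L → ℝ≥0∞) {ε : ℝ≥0∞} (hε : ε ≠ 0) :
    ∃ F ∈ M, J F ≤ sInf (J '' M) + ε := by
  rcases eq_or_ne (sInf (J '' M)) ⊤ with htop | hfin
  · exact ⟨hne.some, hne.some_mem, by simp [htop]⟩
  · obtain ⟨_, ⟨F, hF, rfl⟩, hlt⟩ :=
      exists_lt_of_csInf_lt (hne.image J) (ENNReal.lt_add_right hfin hε)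
    exact ⟨F, hF, hlt.le⟩

section Minimizers

variable {L : Type*} [CompleteLattice L] {J J₁ J₂ : L → ℝ≥0∞} {M : Set L}

namespace IsSigmaSublattice

theorem dual (hM : IsSigmaSublattice M) : IsSigmaSublattice (OrderDual.ofDual ⁻¹' M) :=
  ⟨hM.iInf_mem, hM.iSup_mem⟩

theorem sup_mem (hM : IsSigmaSublattice M) {F G : L} (hF : F ∈ M) (hG : G ∈ M) :
    F ⊔ G ∈ M := by
  obtain ⟨e, he⟩ := exists_surjective_nat Bool
  rw [sup_eq_iSup, ← he.iSup_comp]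
  exact hM.iSup_mem _ fun n => by cases e n <;> assumption

theorem inf_mem (hM : IsSigmaSublattice M) {F G : L} (hF : F ∈ M) (hG : G ∈ M) : F ⊓ G ∈ M :=
  hM.dual.sup_mem hF hG

theorem partialSups_mem (hM : IsSigmaSublattice M) {F : ℕ → L} (hF : ∀ n, F n ∈ M) (n : ℕ) :
    partialSups F n ∈ M := by
  induction n with
  | zero => simpa using hF 0
  | succ n ih => simpa only [partialSups_add_one] using hM.sup_mem ih (hF (n + 1))

end IsSigmaSublattice

namespace IsSubmodularLscOn

theorem dual (hJ : IsSubmodularLscOn J M) :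
    IsSubmodularLscOn (J ∘ OrderDual.ofDual) (OrderDual.ofDual ⁻¹' M) where
  submodular F hF G hG := (add_comm _ _).trans_le (hJ.submodular F hF G hG)
  lsc_iSup F hF hmono := hJ.lsc_iInf F hF hmono
  lsc_iInf F hF hanti := hJ.lsc_iSup F hF hanti

theorem add (h₁ : IsSubmodularLscOn J₁ M) (h₂ : IsSubmodularLscOn J₂ M) :
    IsSubmodularLscOn (fun F => J₁ F + J₂ F) M where
  submodular F hF G hG := by
    simpa only [add_add_add_comm] using
      add_le_add (h₁.submodular F hF G hG) (h₂.submodular F hF G hG)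
  lsc_iSup F hF hmono := (add_le_add (h₁.lsc_iSup F hF hmono) (h₂.lsc_iSup F hF hmono)).trans
    (liminf_add_liminf_le_liminf_add _ _)
  lsc_iInf F hF hanti := (add_le_add (h₁.lsc_iInf F hF hanti) (h₂.lsc_iInf F hF hanti)).trans
    (liminf_add_liminf_le_liminf_add _ _)

theorem apply_sup_le_add (hJ : IsSubmodularLscOn J M) (hM : IsSigmaSublattice M) {m a b : ℝ≥0∞}
    (hm : ∀ F ∈ M, m ≤ J F) {F G : L} (hF : F ∈ M) (hG : G ∈ M)
    (hFa : J F ≤ m + a) (hGb : J G ≤ m + b) : J (F ⊔ G) ≤ m + (a + b) := by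
  rcases eq_or_ne m ⊤ with rfl | hfin
  · simp
  refine (ENNReal.add_le_add_iff_right hfin).1 ?_
  calc J (F ⊔ G) + m
      ≤ J (F ⊔ G) + J (F ⊓ G) := by gcongr; exact hm _ (hM.inf_mem hF hG)
    _ ≤ J F + J G := hJ.submodular F hF G hG
    _ ≤ (m + a) + (m + b) := add_le_add hFa hGb
    _ = m + (a + b) + m := by ring

theorem apply_partialSups_le_add_sum (hJ : IsSubmodularLscOn J M) (hM : IsSigmaSublattice M)
    {m : ℝ≥0∞} (hm : ∀ F ∈ M, m ≤ J F) {F : ℕ → L} (hF : ∀ n, F n ∈ M) {ε : ℕ → ℝ≥0∞}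
    (hε : ∀ n, J (F n) ≤ m + ε n) (n : ℕ) :
    J (partialSups F n) ≤ m + ∑ k ∈ Finset.range (n + 1), ε k := by
  induction n with
  | zero => simpa using hε 0
  | succ n ih =>
    rw [partialSups_add_one, Finset.sum_range_succ]
    exact hJ.apply_sup_le_add hM hm (hM.partialSups_mem hF n) (hF (n + 1)) ih (hε (n + 1))

theorem apply_iSup_le_add_tsum (hJ : IsSubmodularLscOn J M) (hM : IsSigmaSublattice M)
    {m : ℝ≥0∞} (hm : ∀ F ∈ M, m ≤ J F) {F : ℕ → L} (hF : ∀ n, F n ∈ M) {ε : ℕ → ℝ≥0∞}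
    (hε : ∀ n, J (F n) ≤ m + ε n) : J (⨆ n, F n) ≤ m + ∑' n, ε n := by
  have hpartial (n : ℕ) : J (partialSups F n) ≤ m + ∑' k, ε k :=
    (hJ.apply_partialSups_le_add_sum hM hm hF hε n).trans
      (by gcongr; exact ENNReal.sum_le_tsum _)
  calc J (⨆ n, F n)
      = J (⨆ n, partialSups F n) := by rw [iSup_partialSups_eq]
    _ ≤ liminf (fun n => J (partialSups F n)) atTop :=
        hJ.lsc_iSup _ (hM.partialSups_mem hF) (partialSups F).monotone
    _ ≤ liminf (fun _ : ℕ => m + ∑' k, ε k) atTop :=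
        liminf_le_liminf (Eventually.of_forall hpartial)
    _ = m + ∑' k, ε k := liminf_const _

theorem nonempty_minimizers (hJ : IsSubmodularLscOn J M) (hM : IsSigmaSublattice M)
    (hne : M.Nonempty) : (minimizers J M).Nonempty := by
  set m := sInf (J '' M)
  have hm : ∀ F ∈ M, m ≤ J F := fun F hF => sInf_le (mem_image_of_mem J hF)
  have happrox (n : ℕ) : ∃ F ∈ M, J F ≤ m + 2⁻¹ ^ n :=
    exists_mem_le_sInf_image_add hne J (by simp)
  choose F hF hFm using happrox
  let tail (n : ℕ) : L := ⨆ k, F (k + n)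
  have htail_mem (n : ℕ) : tail n ∈ M := hM.iSup_mem _ fun k => hF (k + n)
  have htail_anti : Antitone tail := fun a b hab => iSup_le fun k =>
    le_iSup_of_le (k + (b - a)) (by rw [add_assoc, Nat.sub_add_cancel hab])
  have htail_le (n : ℕ) : J (tail n) ≤ m + ∑' k, 2⁻¹ ^ (k + n) :=
    hJ.apply_iSup_le_add_tsum hM hm (fun k => hF (k + n)) fun k => hFm (k + n)
  have herror : Tendsto (fun n : ℕ => m + ∑' k : ℕ, (2⁻¹ : ℝ≥0∞) ^ (k + n)) atTop (nhds m) := by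
    simpa using tendsto_const_nhds.add (ENNReal.tendsto_sum_nat_add (fun k => 2⁻¹ ^ k) (by simp))
  have hlimsup : J (⨅ n, tail n) ≤ m :=
    calc J (⨅ n, tail n)
        ≤ liminf (fun n => J (tail n)) atTop := hJ.lsc_iInf tail htail_mem htail_anti
      _ ≤ liminf (fun n : ℕ => m + ∑' k, 2⁻¹ ^ (k + n)) atTop :=
          liminf_le_liminf (Eventually.of_forall htail_le)
      _ = m := herror.liminf_eq
  exact ⟨⨅ n, tail n, hM.iInf_mem tail htail_mem, fun G hG => hlimsup.trans (hm G hG)⟩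

theorem iSup_mem_minimizers (hJ : IsSubmodularLscOn J M) (hM : IsSigmaSublattice M)
    {F : ℕ → L} (hF : ∀ n, F n ∈ minimizers J M) : ⨆ n, F n ∈ minimizers J M := by
  have hle : J (⨆ n, F n) ≤ J (F 0) + ∑' _ : ℕ, 0 :=
    hJ.apply_iSup_le_add_tsum hM (hF 0).2 (fun n => (hF n).1) fun n => by
      simpa using (hF n).2 _ (hF 0).1
  rw [tsum_zero, add_zero] at hle
  exact ⟨hM.iSup_mem F fun n => (hF n).1, fun G hG => hle.trans ((hF 0).2 G hG)⟩

theorem isSigmaSublattice_minimizers (hJ : IsSubmodularLscOn J M) (hM : IsSigmaSublattice M) :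
    IsSigmaSublattice (minimizers J M) where
  iSup_mem _ hF := hJ.iSup_mem_minimizers hM hF
  iInf_mem _ hF := hJ.dual.iSup_mem_minimizers hM.dual hF

end IsSubmodularLscOn

end Minimizers

section Complement

variable {L : Type*} [CompleteBooleanAlgebra L] {J : L → ℝ≥0∞} {M N : Set L}

theorem IsSigmaSublattice.preimage_compl (hM : IsSigmaSublattice M) :
    IsSigmaSublattice (compl ⁻¹' M) where
  iSup_mem F hF := by simpa only [mem_preimage, compl_iSup] using hM.iInf_mem _ hF
  iInf_mem F hF := by simpa only [mem_preimage, compl_iInf] using hM.iSup_mem _ hF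

theorem IsSubmodularLscOn.comp_compl (hJ : IsSubmodularLscOn J N) (hMN : MapsTo compl M N) :
    IsSubmodularLscOn (fun F => J Fᶜ) M where
  submodular F hF G hG := by
    simpa only [compl_sup, compl_inf, add_comm] using hJ.submodular Fᶜ (hMN hF) Gᶜ (hMN hG)
  lsc_iSup F hF hmono := by
    simpa only [compl_iSup] using
      hJ.lsc_iInf _ (fun n => hMN (hF n)) fun _ _ hab => compl_le_compl (hmono hab)
  lsc_iInf F hF hanti := by
    simpa only [compl_iInf] using
      hJ.lsc_iSup _ (fun n => hMN (hF n)) fun _ _ hab => compl_le_compl (hanti hab)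

end Complement

section MeasureSpace

variable {α : Type*} [MeasurableSpace α] {μ ν : Measure α} {C M : Set (Set α)}

theorem IsSigmaSublattice.exists_ae_greatest [SFinite ν] (hC : IsSigmaSublattice C)
    (hne : C.Nonempty) (hmeas : ∀ F ∈ C, MeasurableSet F) :
    ∃ T ∈ C, ∀ F ∈ C, ν (F \ T) = 0 := by
  obtain ⟨u, -, hu, huC⟩ := exists_seq_tendsto_sSup (hne.image ν.toFinite) (OrderTop.bddAbove _)
  choose K hK hKu using huC
  have hT : ⋃ n, K n ∈ C := hC.iSup_mem K hK
  have hsup : sSup (ν.toFinite '' C) ≤ ν.toFinite (⋃ n, K n) :=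
    le_of_tendsto' hu fun n => hKu n ▸ measure_mono (subset_iUnion K n)
  refine ⟨⋃ n, K n, hT, fun F hF => toFinite_apply_eq_zero_iff.1 ?_⟩
  have hle : ν.toFinite (F ∪ ⋃ n, K n) ≤ ν.toFinite (⋃ n, K n) :=
    (le_sSup (mem_image_of_mem _ (hC.sup_mem hF hT))).trans hsup
  rw [← union_sdiff_right, measure_sdiff subset_union_right (hmeas _ hT).nullMeasurableSet
    (measure_ne_top _ _), tsub_eq_zero_of_le hle]

theorem IsSigmaSublattice.exists_ae_least [SFinite ν] (hC : IsSigmaSublattice C)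
    (hne : C.Nonempty) (hmeas : ∀ F ∈ C, MeasurableSet F) :
    ∃ T ∈ C, ∀ F ∈ C, ν (T \ F) = 0 := by
  obtain ⟨F₀, hF₀⟩ := hne
  obtain ⟨T, hT, hgreatest⟩ := hC.preimage_compl.exists_ae_greatest (ν := ν)
    ⟨F₀ᶜ, by simpa using hF₀⟩ fun F hF => (hmeas _ hF).of_compl
  refine ⟨Tᶜ, hT, fun F hF => ?_⟩
  rw [sdiff_eq, inter_comm, ← sdiff_eq]
  exact hgreatest Fᶜ (by simpa using hF)

theorem isSubmodularLscOn_measure (hmeas : ∀ F ∈ M, MeasurableSet F) [IsFiniteMeasure μ] :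
    IsSubmodularLscOn (fun F => μ F) M where
  submodular F _ G hG := (measure_union_add_inter F (hmeas G hG)).le
  lsc_iSup _ _ hmono := (tendsto_measure_iUnion_atTop hmono).liminf_eq.ge
  lsc_iInf _ hF hanti := (tendsto_measure_iInter_atTop
    (fun n => (hmeas _ (hF n)).nullMeasurableSet) hanti ⟨0, measure_ne_top _ _⟩).liminf_eq.ge

theorem isSubmodularLscOn_measure_compl (hmeas : ∀ F ∈ M, MeasurableSet F) [IsFiniteMeasure μ] :
    IsSubmodularLscOn (fun F => μ Fᶜ) M :=
  (isSubmodularLscOn_measure (M := {F | MeasurableSet F}) fun _ hF => hF).comp_compl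
    fun F hF => (hmeas F hF).compl

theorem tendsto_measure_symmDiff_iUnion [IsFiniteMeasure μ] {F : ℕ → Set α}
    (hF : ∀ n, MeasurableSet (F n)) (hmono : Monotone F) :
    Tendsto (fun n => μ (symmDiff (F n) (⋃ k, F k))) atTop (nhds 0) := by
  have hsdiff (n : ℕ) : symmDiff (F n) (⋃ k, F k) = (⋃ k, F k) \ F n :=
    symmDiff_of_le (subset_iUnion F n)
  have hempty : ⋂ n, (⋃ k, F k) \ F n = ∅ := by rw [← sdiff_iUnion, Set.sdiff_self]
  simp only [hsdiff]
  rw [← measure_empty (μ := μ), ← hempty]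
  exact tendsto_measure_iInter_atTop
    (fun n => ((MeasurableSet.iUnion hF).diff (hF n)).nullMeasurableSet)
    (fun _ _ hab => sdiff_subset_sdiff_right (hmono hab)) ⟨0, measure_ne_top _ _⟩

theorem tendsto_measure_symmDiff_iInter [IsFiniteMeasure μ] {F : ℕ → Set α}
    (hF : ∀ n, MeasurableSet (F n)) (hanti : Antitone F) :
    Tendsto (fun n => μ (symmDiff (F n) (⋂ k, F k))) atTop (nhds 0) := by
  simpa only [← compl_iInter, compl_symmDiff_compl] using
    tendsto_measure_symmDiff_iUnion (μ := μ) (fun n => (hF n).compl)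
      fun _ _ hab => compl_subset_compl.2 (hanti hab)

/-- The functional `F ↦ per F + ∫_F g dμ`. It is `EReal`-valued because `per` may be infinite and
the integral may be negative. -/
def penalizedEnergy (per : Set α → ℝ≥0∞) (μ : Measure α) (g : α → ℝ) (F : Set α) : EReal :=
  (per F : EReal) + ((∫ x in F, g x ∂μ : ℝ) : EReal)

/-- The functional `F ↦ per F + ∫_F g⁺ dμ + ∫_{Fᶜ} g⁻ dμ`, a nonnegative substitute for
`penalizedEnergy` from which it differs by the constant `∫ g⁻ dμ`. -/
def splitEnergy (per : Set α → ℝ≥0∞) (μ : Measure α) (g : α → ℝ) (F : Set α) : ℝ≥0∞ :=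
  per F + (μ.withDensity (fun x => ENNReal.ofReal (g x)) F
    + μ.withDensity (fun x => ENNReal.ofReal (-g x)) Fᶜ)

variable {per : Set α → ℝ≥0∞} {g : α → ℝ}

theorem isSubmodularLscOn_splitEnergy (hper : IsSubmodularLscOn per M)
    (hmeas : ∀ F ∈ M, MeasurableSet F) (hg : Integrable g μ) :
    IsSubmodularLscOn (splitEnergy per μ g) M :=
  have := isFiniteMeasure_withDensity_ofReal hg.2
  have := isFiniteMeasure_withDensity_ofReal hg.neg.2
  hper.add ((isSubmodularLscOn_measure hmeas).add (isSubmodularLscOn_measure_compl hmeas))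

theorem coe_lintegral_ofReal_add_lintegral_compl_ofReal_neg (hg : Integrable g μ) {F : Set α}
    (hF : MeasurableSet F) :
    ((∫⁻ x in F, ENNReal.ofReal (g x) ∂μ + ∫⁻ x in Fᶜ, ENNReal.ofReal (-g x) ∂μ : ℝ≥0∞) : EReal) =
      ((∫ x in F, g x ∂μ + (∫⁻ x, ENNReal.ofReal (-g x) ∂μ).toReal : ℝ) : EReal) := by
  have hpos : ∫⁻ x in F, ENNReal.ofReal (g x) ∂μ ≠ ⊤ := hg.restrict.lintegral_lt_top.ne
  have hneg (A : Set α) : ∫⁻ x in A, ENNReal.ofReal (-g x) ∂μ ≠ ⊤ :=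
    hg.neg.restrict.lintegral_lt_top.ne
  rw [← EReal.coe_ennreal_toReal (ENNReal.add_ne_top.2 ⟨hpos, hneg Fᶜ⟩),
    integral_eq_lintegral_pos_part_sub_lintegral_neg_part hg.restrict,
    ← lintegral_add_compl (μ := μ) (fun x => ENNReal.ofReal (-g x)) hF,
    ENNReal.toReal_add (hneg F) (hneg Fᶜ), ENNReal.toReal_add hpos (hneg Fᶜ)]
  ring_nf

theorem coe_splitEnergy (hg : Integrable g μ) {F : Set α} (hF : MeasurableSet F) :
    (splitEnergy per μ g F : EReal) =
      penalizedEnergy per μ g F + ((∫⁻ x, ENNReal.ofReal (-g x) ∂μ).toReal : EReal) := by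
  rw [splitEnergy, penalizedEnergy, withDensity_apply _ hF, withDensity_apply _ hF.compl,
    EReal.coe_ennreal_add, coe_lintegral_ofReal_add_lintegral_compl_ofReal_neg hg hF,
    EReal.coe_add, add_assoc]

theorem minimizers_penalizedEnergy_eq (hmeas : ∀ F ∈ M, MeasurableSet F) (hg : Integrable g μ) :
    minimizers (penalizedEnergy per μ g) M = minimizers (splitEnergy per μ g) M := by
  refine minimizers_congr fun F hF G hG => ?_
  rw [← EReal.coe_ennreal_le_coe_ennreal_iff, coe_splitEnergy hg (hmeas F hF),
    coe_splitEnergy hg (hmeas G hG), (EReal.addLECancellable_coe _).add_le_add_iff_right]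

theorem exists_ae_least_and_greatest_minimizer [SFinite ν] (hper : IsSubmodularLscOn per M)
    (hM : IsSigmaSublattice M) (hne : M.Nonempty) (hmeas : ∀ F ∈ M, MeasurableSet F)
    (hg : Integrable g μ) :
    ∃ Tm ∈ minimizers (penalizedEnergy per μ g) M, ∃ TM ∈ minimizers (penalizedEnergy per μ g) M,
      ∀ F ∈ minimizers (penalizedEnergy per μ g) M, ν (Tm \ F) = 0 ∧ ν (F \ TM) = 0 := by
  rw [minimizers_penalizedEnergy_eq hmeas hg]
  have hJ := isSubmodularLscOn_splitEnergy hper hmeas hg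
  have hsub := hJ.isSigmaSublattice_minimizers hM
  have hmin := hJ.nonempty_minimizers hM hne
  obtain ⟨Tm, hTm, hleast⟩ := hsub.exists_ae_least (ν := ν) hmin fun F hF => hmeas F hF.1
  obtain ⟨TM, hTM, hgreatest⟩ := hsub.exists_ae_greatest (ν := ν) hmin fun F hF => hmeas F hF.1
  exact ⟨Tm, hTm, TM, hTM, fun F hF => ⟨hleast F hF, hgreatest F hF⟩⟩

end MeasureSpace

section Cylinder

variable {d : ℕ} {R : ℝ}

theorem measurableSet_slabR (d : ℕ) (R : ℝ) : MeasurableSet (SlabR d R) :=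
  (measurableSet_lt measurable_const measurable_snd).inter
    (measurableSet_lt measurable_snd measurable_const)

theorem slabR_subset_prod_Icc (d : ℕ) (R : ℝ) : SlabR d R ⊆ univ ×ˢ Icc (-R) R :=
  fun _ hx => ⟨trivial, hx.1.le, hx.2.le⟩

theorem integrableOn_slabR_of_continuous {g : Cyl d → ℝ} (hg : Continuous g) (R : ℝ) :
    IntegrableOn g (SlabR d R) :=
  (hg.continuousOn.integrableOn_compact (isCompact_univ.prod isCompact_Icc)).mono_set
    (slabR_subset_prod_Icc d R)

instance isFiniteMeasure_restrict_slabR : IsFiniteMeasure (volume.restrict (SlabR d R)) :=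
  isFiniteMeasure_restrict.2 <| measure_ne_top_of_subset (slabR_subset_prod_Icc d R)
    (isCompact_univ.prod isCompact_Icc).measure_ne_top

theorem continuous_sdist (E : Set (Cyl d)) : Continuous (sdist d E) :=
  (Metric.continuous_infDist_pt _).sub (Metric.continuous_infDist_pt _)

theorem isSigmaSublattice_MR (d : ℕ) (R : ℝ) : IsSigmaSublattice (MR d R) where
  iSup_mem F hF := ⟨.iUnion fun n => (hF n).1, (hF 0).2.1.trans (subset_iUnion F 0),
    iUnion_subset fun n => (hF n).2.2⟩
  iInf_mem F hF := ⟨.iInter fun n => (hF n).1, subset_iInter fun n => (hF n).2.1,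
    (iInter_subset F 0).trans (hF 0).2.2⟩

theorem nonempty_MR (d : ℕ) (hR : 0 ≤ R) : (MR d R).Nonempty :=
  ⟨{x | x.2 < -R}, measurableSet_lt measurable_snd measurable_const, Subset.rfl,
    fun _ hx => lt_of_lt_of_le (b := -R) hx (neg_le_self hR)⟩

theorem GenPerimeter.isSubmodularLscOn (P : GenPerimeter d) {M : Set (Set (Cyl d))}
    (hmeas : ∀ F ∈ M, MeasurableSet F) : IsSubmodularLscOn P.P M where
  submodular F _ G _ := P.submodular F G
  lsc_iSup F hF hmono := P.lsc F _ fun r _ => by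
    simpa only [Measure.restrict_apply' (measurableSet_slabR d r), iSup_eq_iUnion] using
      tendsto_measure_symmDiff_iUnion (μ := volume.restrict (SlabR d r))
        (fun n => hmeas _ (hF n)) hmono
  lsc_iInf F hF hanti := P.lsc F _ fun r _ => by
    simpa only [Measure.restrict_apply' (measurableSet_slabR d r), iInf_eq_iInter] using
      tendsto_measure_symmDiff_iInter (μ := volume.restrict (SlabR d r))
        (fun n => hmeas _ (hF n)) hanti

theorem Ftilde_eq_penalizedEnergy (P : GenPerimeter d) (R h : ℝ) (E : Set (Cyl d)) :
    Ftilde d P R h E = penalizedEnergy P.P (volume.restrict (SlabR d R))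
      (fun x => 1 / h * sdist d E x) := by
  ext F
  rw [Ftilde, penalizedEnergy, integral_const_mul,
    Measure.restrict_restrict' (measurableSet_slabR d R)]

theorem exists_minimal_and_maximal_minimizer_general (P : GenPerimeter d) (hR : 0 ≤ R)
    {g : Cyl d → ℝ} (hg : IntegrableOn g (SlabR d R)) :
    ∃ Tm ∈ minimizers (penalizedEnergy P.P (volume.restrict (SlabR d R)) g) (MR d R),
    ∃ TM ∈ minimizers (penalizedEnergy P.P (volume.restrict (SlabR d R)) g) (MR d R),
      ∀ F ∈ minimizers (penalizedEnergy P.P (volume.restrict (SlabR d R)) g) (MR d R),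
        volume (Tm \ F) = 0 ∧ volume (F \ TM) = 0 :=
  have hmeas : ∀ F ∈ MR d R, MeasurableSet F := fun _ hF => hF.1
  exists_ae_least_and_greatest_minimizer (P.isSubmodularLscOn hmeas) (isSigmaSublattice_MR d R)
    (nonempty_MR d hR) hmeas hg

end Cylinder

/-- Existence of minimal and maximal minimizers of `𝓕̃_h(E,·)` in `𝔐_R`. -/
theorem exists_minimal_and_maximal_minimizer (d : ℕ) (hd : 2 ≤ d) (P : GenPerimeter d)
    (R h : ℝ) (hR : 0 < R) (hh : 0 < h) (E : Set (Cyl d)) (hE : E ∈ MR d R)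
    (hPE : P.P E < ⊤) :
    ∃ Tm TM : Set (Cyl d), IsMinimizer d P R h E Tm ∧ IsMinimizer d P R h E TM ∧
      ∀ F : Set (Cyl d), IsMinimizer d P R h E F →
        volume (Tm \ F) = 0 ∧ volume (F \ TM) = 0 := by
  obtain ⟨Tm, hTm, TM, hTM, hext⟩ := exists_minimal_and_maximal_minimizer_general P hR.le
    ((integrableOn_slabR_of_continuous (continuous_sdist E) R).const_mul (1 / h))
  rw [← Ftilde_eq_penalizedEnergy] at hTm hTM hext
  exact ⟨Tm, TM, hTm, hTM, hext⟩
end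
end

section
/- Let 𝒫 be a generalized perimeter, L > 0, R > 0, E₀ ∈ 𝔠_L ∩ 𝔐_R, and 0 < h < 1. Let {E^{(h)}_t}_{t ≥ 0} be the approximate flat solution with initial datum E₀ and time step h. Then there exists a constant C > 0, depending only on d, L and 𝒫(E₀), such that |E^{(h)}_t Δ E^{(h)}_s| ≤ C max{h^{1/2}, |t−s|^{1/2}} for every s, t ≥ 0. -/
open MeasureTheory Filter Set
open scoped ENNReal

noncomputable section

/-- The discrete-in-time approximate flat solution with time step `h`, initial datum `E₀`:
`Eh k` is the set at time `k h`; each step is the (unique, Lipschitz-subgraph) minimizer of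
the incremental problem. -/
def IsApproxFlow (d : ℕ) (P : GenPerimeter d) (L R h : ℝ) (E₀ : Set (Cyl d))
    (Eh : ℕ → Set (Cyl d)) : Prop :=
  Eh 0 = E₀ ∧ ∀ k : ℕ, Eh (k+1) ∈ LipClass d L ∧ IsMinimizer d P R h (Eh k) (Eh (k+1))

/-!
Let `V = |E_{k+1} Δ E_k|` be the volume swept in one step. Testing the minimality of `E_{k+1}`
against `E_k` bounds the dissipation `∫_{E_{k+1} Δ E_k} |sdist_{E_k}|` by
`h (𝒫(E_k) - 𝒫(E_{k+1}))`. Since `∂E_k` is a Lipschitz graph, the points at distance at most `ε`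
from it fill a volume `O(ε)`, so by Chebyshev `V ≤ Aε + dissipation / ε` for every `ε > 0`, that is,
`V² ≤ 4A · dissipation`. Summing over the steps between `s` and `t`, Cauchy-Schwarz and the
telescoping of `𝒫` give `|E_t Δ E_s|² ≤ C (|t - s| + h) 𝒫(E₀)`.
-/

open scoped NNReal symmDiff

section MeasureSpace

variable {α : Type*} [MeasurableSpace α] {μ : Measure α}

lemma measureReal_le_sublevel_add_setIntegral_div {S : Set α} {f : α → ℝ} {ε : ℝ}
    (hμS : μ S ≠ ⊤) (hf : 0 ≤ f) (hfS : IntegrableOn f S μ) (hε : 0 < ε) :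
    μ.real S ≤ μ.real (S ∩ {x | f x ≤ ε}) + (∫ x in S, f x ∂μ) / ε := by
  have hcover : S ⊆ (S ∩ {x | f x ≤ ε}) ∪ ({x | ε ≤ f x} ∩ S) := fun x hx =>
    (le_total (f x) ε).imp (fun h => ⟨hx, h⟩) (fun h => ⟨h, hx⟩)
  have hfin_low : μ (S ∩ {x | f x ≤ ε}) ≠ ⊤ := measure_ne_top_of_subset inter_subset_left hμS
  have hfin_high : μ ({x | ε ≤ f x} ∩ S) ≠ ⊤ := measure_ne_top_of_subset inter_subset_right hμS
  have : IsFiniteMeasure (μ.restrict S) := isFiniteMeasure_restrict.2 hμS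
  have hrestrict : μ.real ({x | ε ≤ f x} ∩ S) ≤ (μ.restrict S).real {x | ε ≤ f x} :=
    ENNReal.toReal_mono (measure_ne_top _ _) (Measure.le_restrict_apply _ _)
  have hchebyshev : (μ.restrict S).real {x | ε ≤ f x} ≤ (∫ x in S, f x ∂μ) / ε :=
    (le_div_iff₀' hε).2 (mul_meas_ge_le_integral_of_nonneg (.of_forall hf) hfS ε)
  calc μ.real S
      ≤ μ.real ((S ∩ {x | f x ≤ ε}) ∪ ({x | ε ≤ f x} ∩ S)) :=
        measureReal_mono hcover (measure_union_ne_top hfin_low hfin_high)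
    _ ≤ μ.real (S ∩ {x | f x ≤ ε}) + μ.real ({x | ε ≤ f x} ∩ S) := measureReal_union_le _ _
    _ ≤ _ := by gcongr; exact hrestrict.trans hchebyshev

lemma measureReal_sq_le_mul_setIntegral {S : Set α} {f : α → ℝ} {A : ℝ}
    (hμS : μ S ≠ ⊤) (hf : 0 ≤ f) (hfS : IntegrableOn f S μ)
    (hlow : ∀ ε > 0, μ.real (S ∩ {x | f x ≤ ε}) ≤ A * ε) :
    μ.real S ^ 2 ≤ 4 * A * ∫ x in S, f x ∂μ := by
  set I := ∫ x in S, f x ∂μ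
  have hI : 0 ≤ I := integral_nonneg hf
  have hA : 0 ≤ A := by simpa using measureReal_nonneg.trans (hlow 1 one_pos)
  -- The bound `V ≤ A ε + I / ε` says that the quadratic `A ε² - V ε + I` is nonnegative.
  have hquad : ∀ ε : ℝ, 0 ≤ A * (ε * ε) + -μ.real S * ε + I := by
    intro ε
    have hV : 0 ≤ μ.real S := measureReal_nonneg
    rcases le_or_gt ε 0 with hε | hε
    · nlinarith [mul_nonneg hA (mul_self_nonneg ε)]
    · have hle : μ.real S ≤ A * ε + I / ε :=
        (measureReal_le_sublevel_add_setIntegral_div hμS hf hfS hε).trans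
          (by gcongr; exact hlow ε hε)
      have := mul_le_mul_of_nonneg_right hle hε.le
      rw [add_mul, div_mul_cancel₀ _ hε.ne'] at this
      linarith
  have hdiscrim := discrim_le_zero hquad
  rw [discrim] at hdiscrim
  linarith

lemma measureReal_symmDiff_le_sum {E : ℕ → Set α} (hfin : ∀ i j, μ (E i ∆ E j) ≠ ⊤) (m j : ℕ) :
    μ.real (E (m + j) ∆ E m) ≤ ∑ i ∈ Finset.range j, μ.real (E (m + (i + 1)) ∆ E (m + i)) := by
  induction j with
  | zero => simp
  | succ j ih =>
    rw [Finset.sum_range_succ]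
    calc μ.real (E (m + (j + 1)) ∆ E m)
        ≤ μ.real (E (m + (j + 1)) ∆ E (m + j) ∪ E (m + j) ∆ E m) :=
          measureReal_mono (symmDiff_triangle _ _ _) (measure_union_ne_top (hfin _ _) (hfin _ _))
      _ ≤ μ.real (E (m + (j + 1)) ∆ E (m + j)) + μ.real (E (m + j) ∆ E m) :=
          measureReal_union_le _ _
      _ ≤ _ := by linarith

lemma measureReal_symmDiff_sq_le_of_forall_succ {E : ℕ → Set α} {p : ℕ → ℝ} {c : ℝ}
    (hfin : ∀ i j, μ (E i ∆ E j) ≠ ⊤)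
    (hstep : ∀ k, μ.real (E (k + 1) ∆ E k) ^ 2 ≤ c * (p k - p (k + 1))) (m j : ℕ) :
    μ.real (E (m + j) ∆ E m) ^ 2 ≤ j * (c * (p m - p (m + j))) := by
  calc μ.real (E (m + j) ∆ E m) ^ 2
      ≤ (∑ i ∈ Finset.range j, μ.real (E (m + (i + 1)) ∆ E (m + i))) ^ 2 := by
        gcongr; exact measureReal_symmDiff_le_sum hfin m j
    _ ≤ j * ∑ i ∈ Finset.range j, μ.real (E (m + (i + 1)) ∆ E (m + i)) ^ 2 := by
        simpa only [Finset.card_range] using sq_sum_le_card_mul_sum_sq (s := Finset.range j)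
    _ ≤ j * ∑ i ∈ Finset.range j, c * (p (m + i) - p (m + (i + 1))) := by
        gcongr with i; exact hstep (m + i)
    _ = j * (c * (p m - p (m + j))) := by
        rw [← Finset.mul_sum, Finset.sum_range_sub' (fun i => p (m + i)), add_zero]

end MeasureSpace

section SignedDistance

variable {Y : Type*} [PseudoMetricSpace Y]

/-- The signed distance from a set, negative inside and positive outside; `sdist` in an arbitrary
pseudometric space. -/
def setSignedDist (E : Set Y) (x : Y) : ℝ := Metric.infDist x E - Metric.infDist x Eᶜ

lemma continuous_setSignedDist (E : Set Y) : Continuous (setSignedDist E) :=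
  (Metric.continuous_infDist_pt E).sub (Metric.continuous_infDist_pt Eᶜ)

lemma setSignedDist_of_mem {E : Set Y} {x : Y} (hx : x ∈ E) :
    setSignedDist E x = -Metric.infDist x Eᶜ := by
  rw [setSignedDist, Metric.infDist_zero_of_mem hx, zero_sub]

lemma setSignedDist_of_notMem {E : Set Y} {x : Y} (hx : x ∉ E) :
    setSignedDist E x = Metric.infDist x E := by
  rw [setSignedDist, Metric.infDist_zero_of_mem (mem_compl hx), sub_zero]

lemma abs_setSignedDist_of_mem {E : Set Y} {x : Y} (hx : x ∈ E) :
    |setSignedDist E x| = -setSignedDist E x := by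
  rw [abs_of_nonpos]
  simpa only [setSignedDist_of_mem hx, neg_nonpos] using Metric.infDist_nonneg

lemma abs_setSignedDist_of_notMem {E : Set Y} {x : Y} (hx : x ∉ E) :
    |setSignedDist E x| = setSignedDist E x := by
  rw [abs_of_nonneg]
  simpa only [setSignedDist_of_notMem hx] using Metric.infDist_nonneg

lemma le_mul_infDist_of_forall_nonpos {K : ℝ≥0} {φ : Y → ℝ} (hφ : LipschitzWith K φ) {s : Set Y}
    (hs : s.Nonempty) (hφs : ∀ y ∈ s, φ y ≤ 0) (x : Y) : φ x ≤ K * Metric.infDist x s := by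
  have := hs.to_subtype
  rw [Metric.infDist_eq_iInf, Real.mul_iInf_of_nonneg K.coe_nonneg]
  refine le_ciInf fun y => ?_
  linarith [hφs y y.2, hφ.le_add_mul x y]

lemma abs_le_mul_abs_setSignedDist_sublevel {K : ℝ≥0} {φ : Y → ℝ} (hφ : LipschitzWith K φ)
    (hne : {y | φ y ≤ 0}.Nonempty) (hne' : {y | φ y ≤ 0}ᶜ.Nonempty) (x : Y) :
    |φ x| ≤ K * |setSignedDist {y | φ y ≤ 0} x| := by
  by_cases hx : x ∈ {y | φ y ≤ 0}
  · rw [abs_of_nonpos hx, setSignedDist_of_mem hx, abs_neg, abs_of_nonneg Metric.infDist_nonneg]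
    exact le_mul_infDist_of_forall_nonpos hφ.neg hne'
      (fun y (hy : ¬φ y ≤ 0) => neg_nonpos.2 (not_le.1 hy).le) x
  · rw [abs_of_pos (not_le.1 hx), setSignedDist_of_notMem hx,
      abs_of_nonneg Metric.infDist_nonneg]
    exact le_mul_infDist_of_forall_nonpos hφ hne (fun y hy => hy) x

lemma setIntegral_setSignedDist_sub [MeasurableSpace Y] {μ : Measure Y} {E F S : Set Y}
    (hE : MeasurableSet E) (hF : MeasurableSet F) (hint : IntegrableOn (setSignedDist E) S μ) :
    (∫ x in F ∩ S, setSignedDist E x ∂μ) - ∫ x in E ∩ S, setSignedDist E x ∂μ =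
      ∫ x in F ∆ E ∩ S, |setSignedDist E x| ∂μ := by
  rw [inter_comm F, inter_comm E, inter_comm (F ∆ E), ← setIntegral_indicator hF,
    ← setIntegral_indicator hE, ← setIntegral_indicator (hF.symmDiff hE),
    ← integral_sub (hint.indicator hF) (hint.indicator hE)]
  congr 1 with x
  by_cases hxE : x ∈ E <;> by_cases hxF : x ∈ F <;>
    simp [indicator, mem_symmDiff, hxE, hxF, abs_setSignedDist_of_mem,
      abs_setSignedDist_of_notMem]

end SignedDistance

section Cylinder

variable {X : Type*}

/-- The slab `X × (-R, R)`, i.e. `SlabR` over an arbitrary base. -/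
def openSlab (X : Type*) (R : ℝ) : Set (X × ℝ) := Prod.snd ⁻¹' Ioo (-R) R

/-- The class `𝔐_R` over an arbitrary base: measurable sets squeezed between `X × (-∞, -R)` and
`X × (-∞, R)`. -/
structure IsSqueezed [MeasurableSpace X] (R : ℝ) (E : Set (X × ℝ)) : Prop where
  measurableSet : MeasurableSet E
  mem_of_lt : ∀ x : X × ℝ, x.2 < -R → x ∈ E
  lt_of_mem : ∀ x ∈ E, x.2 < R

/-- The class `𝔠_K` over an arbitrary base: subgraphs of `K`-Lipschitz functions. -/
def IsLipschitzSubgraph [PseudoMetricSpace X] (K : ℝ≥0) (E : Set (X × ℝ)) : Prop :=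
  ∃ g : X → ℝ, LipschitzWith K g ∧ E = {x | x.2 ≤ g x.1}

lemma abs_sub_le_mul_abs_setSignedDist_subgraph [PseudoMetricSpace X] {K : ℝ≥0} {g : X → ℝ}
    (hg : LipschitzWith K g) (x : X × ℝ) :
    |x.2 - g x.1| ≤ (1 + K) * |setSignedDist {y : X × ℝ | y.2 ≤ g y.1} x| := by
  have hheight : LipschitzWith (1 + K) fun y : X × ℝ => y.2 - g y.1 := by
    simpa only [mul_one, Function.comp_apply] using
      LipschitzWith.prod_snd.sub (hg.comp LipschitzWith.prod_fst)
  simpa only [sub_nonpos, NNReal.coe_add, NNReal.coe_one] using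
    abs_le_mul_abs_setSignedDist_sublevel hheight
      ⟨(x.1, g x.1), by simp⟩ ⟨(x.1, g x.1 + 1), by simp⟩ x

section Squeezed

variable [MeasurableSpace X] {R : ℝ} {E F : Set (X × ℝ)}

lemma IsSqueezed.symmDiff_subset (hE : IsSqueezed R E) (hF : IsSqueezed R F) :
    E ∆ F ⊆ Prod.snd ⁻¹' Ico (-R) R := by
  rintro x (⟨hxE, hxF⟩ | ⟨hxF, hxE⟩)
  · exact ⟨not_lt.1 fun h => hxF (hF.mem_of_lt x h), hE.lt_of_mem x hxE⟩
  · exact ⟨not_lt.1 fun h => hxE (hE.mem_of_lt x h), hF.lt_of_mem x hxF⟩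

lemma IsSqueezed.abs_setSignedDist_le [PseudoMetricSpace X] (hE : IsSqueezed R E) {x : X × ℝ}
    (hx : x ∈ openSlab X R) : |setSignedDist E x| ≤ 2 * R + 1 := by
  obtain ⟨hlow, hhigh⟩ : -R < x.2 ∧ x.2 < R := hx
  have hdist : ∀ c : ℝ, dist x (x.1, c) = |x.2 - c| := fun c => by
    simp [Prod.dist_eq, Real.dist_eq]
  have hbelow : Metric.infDist x E ≤ |x.2 - (-R - 1)| :=
    hdist _ ▸ Metric.infDist_le_dist_of_mem (hE.mem_of_lt _ (by simp))
  have habove : Metric.infDist x Eᶜ ≤ |x.2 - R| :=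
    hdist _ ▸ Metric.infDist_le_dist_of_mem (fun h => (hE.lt_of_mem (x.1, R) h).false)
  rw [abs_of_nonneg (by linarith)] at hbelow
  rw [abs_of_nonpos (by linarith)] at habove
  have := Metric.infDist_nonneg (x := x) (s := E)
  have := Metric.infDist_nonneg (x := x) (s := Eᶜ)
  rw [setSignedDist, abs_le]
  constructor <;> linarith

end Squeezed

section Measure

variable [MeasureSpace X] {R : ℝ} {E F : Set (X × ℝ)}

lemma volume_abs_sub_le {g : X → ℝ} (hg : Measurable g) (r : ℝ) :
    volume {x : X × ℝ | |x.2 - g x.1| ≤ r} = ENNReal.ofReal (2 * r) * volume (univ : Set X) := by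
  have hmeas : MeasurableSet {x : X × ℝ | |x.2 - g x.1| ≤ r} :=
    measurableSet_le (by fun_prop) (by fun_prop)
  have hslice : ∀ y : X, volume (Prod.mk y ⁻¹' {x : X × ℝ | |x.2 - g x.1| ≤ r}) =
      ENNReal.ofReal (2 * r) := fun y => Real.volume_closedBall (g y) r
  rw [Measure.volume_eq_prod, Measure.prod_apply hmeas]
  simp only [hslice, lintegral_const]

lemma IsSqueezed.symmDiff_inter_openSlab_ae_eq (hE : IsSqueezed R E) (hF : IsSqueezed R F) :
    (E ∆ F ∩ openSlab X R : Set (X × ℝ)) =ᵐ[volume] (E ∆ F : Set (X × ℝ)) := by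
  have hslab : openSlab X R =ᵐ[volume] Prod.snd ⁻¹' Ico (-R) R :=
    Measure.quasiMeasurePreserving_snd.preimage_ae_eq Ioo_ae_eq_Ico
  simpa only [inter_eq_left.2 (hE.symmDiff_subset hF)] using
    (ae_eq_refl (E ∆ F : Set (X × ℝ))).inter hslab

variable [IsFiniteMeasure (volume : Measure X)]

lemma volume_snd_preimage_ne_top {s : Set ℝ} (hs : volume s ≠ ⊤) :
    volume (Prod.snd ⁻¹' s : Set (X × ℝ)) ≠ ⊤ := by
  rw [← univ_prod, Measure.volume_eq_prod, Measure.prod_prod]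
  exact ENNReal.mul_ne_top (measure_ne_top _ _) hs

lemma IsSqueezed.volume_symmDiff_ne_top (hE : IsSqueezed R E) (hF : IsSqueezed R F) :
    volume (E ∆ F) ≠ ⊤ :=
  measure_ne_top_of_subset (hE.symmDiff_subset hF) (volume_snd_preimage_ne_top (by simp))

end Measure

variable [PseudoMetricSpace X] [MeasureSpace X] [OpensMeasurableSpace X]
  [IsFiniteMeasure (volume : Measure X)] {R : ℝ} {E F : Set (X × ℝ)}

lemma IsSqueezed.integrableOn_setSignedDist (hE : IsSqueezed R E) :
    IntegrableOn (setSignedDist E) (openSlab X R) := by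
  have hslab : MeasurableSet (openSlab X R) := measurable_snd measurableSet_Ioo
  refine .of_bound (volume_snd_preimage_ne_top (by simp)).lt_top
    (continuous_setSignedDist E).measurable.aestronglyMeasurable (2 * R + 1) ?_
  exact ae_restrict_of_forall_mem hslab fun x hx => hE.abs_setSignedDist_le hx

lemma measureReal_inter_abs_setSignedDist_le {K : ℝ≥0} (hlip : IsLipschitzSubgraph K E)
    (S : Set (X × ℝ)) {ε : ℝ} (hε : 0 ≤ ε) :
    volume.real (S ∩ {x | |setSignedDist E x| ≤ ε}) ≤
      2 * (1 + K) * volume.real (univ : Set X) * ε := by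
  obtain ⟨g, hg, rfl⟩ := hlip
  have hband : S ∩ {x | |setSignedDist {y : X × ℝ | y.2 ≤ g y.1} x| ≤ ε} ⊆
      {x | |x.2 - g x.1| ≤ (1 + K) * ε} := fun x hx =>
    (abs_sub_le_mul_abs_setSignedDist_subgraph hg x).trans
      (mul_le_mul_of_nonneg_left hx.2 (by positivity))
  have hvolume := volume_abs_sub_le hg.continuous.measurable ((1 + K) * ε)
  refine (measureReal_mono hband (hvolume ▸ by finiteness)).trans_eq ?_
  rw [measureReal_def, hvolume, ENNReal.toReal_mul, ENNReal.toReal_ofReal (by positivity),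
    measureReal_def]
  ring

lemma measureReal_symmDiff_sq_le_mul_dissipation {K : ℝ≥0} (hlip : IsLipschitzSubgraph K E)
    (hE : IsSqueezed R E) (hF : IsSqueezed R F) :
    volume.real (F ∆ E) ^ 2 ≤ 8 * (1 + K) * volume.real (univ : Set X) *
      ((∫ x in F ∩ openSlab X R, setSignedDist E x) -
        ∫ x in E ∩ openSlab X R, setSignedDist E x) := by
  have hint := hE.integrableOn_setSignedDist
  rw [setIntegral_setSignedDist_sub hE.measurableSet hF.measurableSet hint,
    ← measureReal_congr (hF.symmDiff_inter_openSlab_ae_eq hE)]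
  refine (measureReal_sq_le_mul_setIntegral
    (measure_ne_top_of_subset inter_subset_left (hF.volume_symmDiff_ne_top hE))
    (fun x => abs_nonneg _) (IntegrableOn.mono_set hint.abs inter_subset_right)
    fun ε hε => measureReal_inter_abs_setSignedDist_le hlip _ (le_of_lt hε)).trans_eq ?_
  ring

end Cylinder

section IncrementalEnergy

lemma ne_top_of_coe_add_coe_le {p q : ℝ≥0∞} {a b : ℝ} (hq : q ≠ ⊤)
    (hle : (p : EReal) + a ≤ q + b) : p ≠ ⊤ := by
  rintro rfl
  rw [← EReal.coe_ennreal_toReal hq, ← EReal.coe_add, EReal.coe_ennreal_top,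
    EReal.top_add_coe, top_le_iff] at hle
  exact EReal.coe_ne_top _ hle

lemma sub_le_toReal_sub_toReal_of_coe_add_coe_le {p q : ℝ≥0∞} {a b : ℝ} (hq : q ≠ ⊤)
    (hle : (p : EReal) + a ≤ q + b) : a - b ≤ q.toReal - p.toReal := by
  have hp := ne_top_of_coe_add_coe_le hq hle
  rw [← EReal.coe_ennreal_toReal hp, ← EReal.coe_ennreal_toReal hq] at hle
  norm_cast at hle
  linarith

variable {X : Type*} [PseudoMetricSpace X] [MeasureSpace X]

/-- The incremental functional `𝓕̃_h(E, F)` over an arbitrary base, for an arbitrary functional `Φ`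
in place of the perimeter. -/
def incrementalEnergy (Φ : Set (X × ℝ) → ℝ≥0∞) (R h : ℝ) (E F : Set (X × ℝ)) : EReal :=
  (Φ F : EReal) + ((1 / h * ∫ x in F ∩ openSlab X R, setSignedDist E x : ℝ) : EReal)

/-- A discrete evolution of Lipschitz subgraphs in `𝔐_R` each step of which does at least as well as
standing still for the incremental energy; approximate flat solutions are examples. -/
structure IsDescentScheme (Φ : Set (X × ℝ) → ℝ≥0∞) (K : ℝ≥0) (R h : ℝ) (E : ℕ → Set (X × ℝ)) :
    Prop where
  isLipschitzSubgraph : ∀ k, IsLipschitzSubgraph K (E k)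
  isSqueezed : ∀ k, IsSqueezed R (E k)
  energy_le : ∀ k,
    incrementalEnergy Φ R h (E k) (E (k + 1)) ≤ incrementalEnergy Φ R h (E k) (E k)

namespace IsDescentScheme

variable {Φ : Set (X × ℝ) → ℝ≥0∞} {K : ℝ≥0} {R h : ℝ} {E : ℕ → Set (X × ℝ)}

lemma ne_top (hE : IsDescentScheme Φ K R h E) (h₀ : Φ (E 0) ≠ ⊤) (k : ℕ) : Φ (E k) ≠ ⊤ := by
  induction k with
  | zero => exact h₀
  | succ k ih => exact ne_top_of_coe_add_coe_le ih (hE.energy_le k)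

lemma dissipation_le (hE : IsDescentScheme Φ K R h E) (hh : 0 < h) (h₀ : Φ (E 0) ≠ ⊤) (k : ℕ) :
    (∫ x in E (k + 1) ∩ openSlab X R, setSignedDist (E k) x) -
        ∫ x in E k ∩ openSlab X R, setSignedDist (E k) x ≤
      h * ((Φ (E k)).toReal - (Φ (E (k + 1))).toReal) := by
  have hle := sub_le_toReal_sub_toReal_of_coe_add_coe_le (hE.ne_top h₀ k) (hE.energy_le k)
  rwa [← mul_sub, one_div, inv_mul_le_iff₀ hh] at hle

variable [OpensMeasurableSpace X] [IsFiniteMeasure (volume : Measure X)]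

lemma measureReal_symmDiff_succ_sq_le (hE : IsDescentScheme Φ K R h E) (hh : 0 < h)
    (h₀ : Φ (E 0) ≠ ⊤) (k : ℕ) :
    volume.real (E (k + 1) ∆ E k) ^ 2 ≤ 8 * (1 + K) * volume.real (univ : Set X) * h *
      ((Φ (E k)).toReal - (Φ (E (k + 1))).toReal) := by
  rw [mul_assoc _ h]
  refine (measureReal_symmDiff_sq_le_mul_dissipation (hE.isLipschitzSubgraph k) (hE.isSqueezed k)
    (hE.isSqueezed (k + 1))).trans ?_
  gcongr
  exact hE.dissipation_le hh h₀ k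

lemma antitone_toReal (hE : IsDescentScheme Φ K R h E) (hh : 0 < h) (h₀ : Φ (E 0) ≠ ⊤) :
    Antitone fun k => (Φ (E k)).toReal := by
  refine antitone_nat_of_succ_le fun k => ?_
  have hdissipation := hE.dissipation_le hh h₀ k
  rw [setIntegral_setSignedDist_sub (hE.isSqueezed k).measurableSet
    (hE.isSqueezed (k + 1)).measurableSet (hE.isSqueezed k).integrableOn_setSignedDist]
    at hdissipation
  have hnonneg := (integral_nonneg fun x => abs_nonneg _).trans hdissipation
  exact sub_nonneg.1 (nonneg_of_mul_nonneg_right hnonneg hh)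

lemma measureReal_symmDiff_add_sq_le (hE : IsDescentScheme Φ K R h E) (hh : 0 < h)
    (h₀ : Φ (E 0) ≠ ⊤) (m j : ℕ) :
    volume.real (E (m + j) ∆ E m) ^ 2 ≤
      8 * (1 + K) * volume.real (univ : Set X) * (Φ (E 0)).toReal * (j * h) := by
  have hdrop : (Φ (E m)).toReal - (Φ (E (m + j))).toReal ≤ (Φ (E 0)).toReal :=
    (sub_le_self _ ENNReal.toReal_nonneg).trans (hE.antitone_toReal hh h₀ m.zero_le)
  calc volume.real (E (m + j) ∆ E m) ^ 2
      ≤ j * (8 * (1 + K) * volume.real (univ : Set X) * h *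
          ((Φ (E m)).toReal - (Φ (E (m + j))).toReal)) :=
        measureReal_symmDiff_sq_le_of_forall_succ
          (fun i j => (hE.isSqueezed i).volume_symmDiff_ne_top (hE.isSqueezed j))
          (hE.measureReal_symmDiff_succ_sq_le hh h₀) m j
    _ ≤ j * (8 * (1 + K) * volume.real (univ : Set X) * h * (Φ (E 0)).toReal) := by gcongr
    _ = _ := by ring

end IsDescentScheme

end IncrementalEnergy

lemma floor_div_sub_floor_div_mul_le {h s t : ℝ} (hh : 0 < h) (ht : 0 ≤ t) :
    ((⌊t / h⌋₊ : ℝ) - ⌊s / h⌋₊) * h ≤ 2 * max h |t - s| := by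
  have hlt : s < (⌊s / h⌋₊ + 1) * h := (div_lt_iff₀ hh).1 (Nat.lt_floor_add_one _)
  have hle : ⌊t / h⌋₊ * h ≤ t := (le_div_iff₀ hh).1 (Nat.floor_le (by positivity))
  linarith [le_max_left h |t - s|, le_max_right h |t - s|, le_abs_self (t - s)]

lemma sqrt_max_eq_max_rpow (a b : ℝ) : √(max a b) = max (a ^ (1 / 2 : ℝ)) (b ^ (1 / 2 : ℝ)) := by
  rw [← Real.sqrt_eq_rpow, ← Real.sqrt_eq_rpow, Real.sqrt_monotone.map_max]

theorem approxFlow_holder_general {X : Type*} [PseudoMetricSpace X] [MeasureSpace X]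
    [OpensMeasurableSpace X] [IsFiniteMeasure (volume : Measure X)] {Φ : Set (X × ℝ) → ℝ≥0∞}
    {K : ℝ≥0} {R h : ℝ} {E : ℕ → Set (X × ℝ)} (hE : IsDescentScheme Φ K R h E) (hh : 0 < h)
    (h₀ : Φ (E 0) ≠ ⊤) {s t : ℝ} (hs : 0 ≤ s) (ht : 0 ≤ t) :
    volume.real (E ⌊t / h⌋₊ ∆ E ⌊s / h⌋₊) ≤
      √(16 * (1 + K) * volume.real (univ : Set X) * (Φ (E 0)).toReal) *
        max (h ^ (1 / 2 : ℝ)) (|t - s| ^ (1 / 2 : ℝ)) := by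
  wlog hst : s ≤ t generalizing s t
  · rw [symmDiff_comm, abs_sub_comm]
    exact this ht hs (le_of_not_ge hst)
  obtain ⟨j, hj⟩ := Nat.exists_eq_add_of_le (Nat.floor_mono (div_le_div_of_nonneg_right hst hh.le))
  have hsteps : j * h ≤ 2 * max h |t - s| := by
    simpa [hj] using floor_div_sub_floor_div_mul_le (s := s) hh ht
  rw [← sqrt_max_eq_max_rpow, ← Real.sqrt_mul (by positivity), hj]
  refine Real.le_sqrt_of_sq_le ?_
  calc volume.real (E (⌊s / h⌋₊ + j) ∆ E ⌊s / h⌋₊) ^ 2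
      ≤ 8 * (1 + K) * volume.real (univ : Set X) * (Φ (E 0)).toReal * (j * h) :=
        hE.measureReal_symmDiff_add_sq_le hh h₀ _ j
    _ ≤ 8 * (1 + K) * volume.real (univ : Set X) * (Φ (E 0)).toReal * (2 * max h |t - s|) := by
        gcongr
    _ = _ := by ring

lemma IsApproxFlow.isDescentScheme {d : ℕ} {P : GenPerimeter d} {L R h : ℝ} {E₀ : Set (Cyl d)}
    {Eh : ℕ → Set (Cyl d)} (hflow : IsApproxFlow d P L R h E₀ Eh)
    (hE₀ : E₀ ∈ LipClass d L ∩ MR d R) : IsDescentScheme P.P L.toNNReal R h Eh := by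
  obtain ⟨hinit, hstep⟩ := hflow
  have hmem : ∀ k, Eh k ∈ LipClass d L ∩ MR d R
    | 0 => hinit ▸ hE₀
    | k + 1 => ⟨(hstep k).1, (hstep k).2.1⟩
  exact
    { isLipschitzSubgraph := fun k => (hmem k).1
      isSqueezed := fun k => ⟨(hmem k).2.1, (hmem k).2.2.1, (hmem k).2.2.2⟩
      energy_le := fun k => (hstep k).2.2 _ (hmem k).2 }

lemma measureReal_univ_torus (d : ℕ) : volume.real (univ : Set (Torus d)) = 1 := by
  rw [measureReal_def, volume_pi, Measure.pi_univ]
  simp [AddCircle.measure_univ]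

/-- Discrete Hölder continuity in time of the approximate flat solutions, with a constant
depending only on `d`, `L` and `𝒫(E₀)`. -/
theorem approxFlow_holder (d : ℕ) (hd : 2 ≤ d) (L : ℝ) (hL : 0 < L) :
    ∃ C : ℝ≥0∞ → ℝ,
      ∀ (P : GenPerimeter d) (R h : ℝ), 0 < R → 0 < h → h < 1 →
      ∀ E₀ ∈ LipClass d L ∩ MR d R, ∀ Eh : ℕ → Set (Cyl d),
        IsApproxFlow d P L R h E₀ Eh →
        0 < C (P.P E₀) ∧
        ∀ s t : ℝ, 0 ≤ s → 0 ≤ t →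
          (volume (symmDiff (Eh ⌊t / h⌋₊) (Eh ⌊s / h⌋₊))).toReal
            ≤ C (P.P E₀) * max (h ^ (1/2 : ℝ)) (|t - s| ^ (1/2 : ℝ)) := by
  refine ⟨fun p => √(16 * (1 + L) * p.toReal) + 1, fun P R h _ hh _ E₀ hE₀ Eh hflow =>
    ⟨by positivity, fun s t hs ht => ?_⟩⟩
  have hfin : P.P (Eh 0) ≠ ⊤ := hflow.1 ▸ (P.lip_finite L hL E₀ hE₀.1).ne
  have hholder := approxFlow_holder_general (hflow.isDescentScheme hE₀) hh hfin hs ht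
  rw [measureReal_univ_torus, mul_one, Real.coe_toNNReal L hL.le, hflow.1] at hholder
  exact hholder.trans (by gcongr; exact le_add_of_nonneg_right zero_le_one)
end
end
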